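/- arXiv:1809.03089 — 2 statements merged into one kernel-verified Lean document; each statement's English description precedes it below -/
import Mathlib

section
/- Let M_κ be a multislice on n ≥ 4 points with κ_i ≥ 2 for all i ∈ [ℓ]. If A ⊆ M_κ is nonempty with vol(A) = α ∈ (0,1) and Φ(A) = 2(1−α)/(n−1), then there exist a coordinate j ∈ [n] and a set of colours S ⊆ [ℓ] with Σ_{i∈S} κ_i = αn such that A = { u ∈ M_κ : u_j ∈ S }. -/
/-!
Let `L` be the Laplacian of the transposition walk. Expanding `‖L v‖²` over pairs of
transpositions gives a Bochner-type inequality `‖L v‖² ≥ 2n ⟪L v, v⟫ + R`, where `R ≥ 0` is a sum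
of squares of mixed differences `(1 - (a b)) (1 - (c d)) v` over disjoint pairs: disjoint pairs
contribute these squares, and pairs sharing a point are controlled by the nonnegativity of the
sign component of each copy of `S₃`. A set attaining the isoperimetric bound has a centred
indicator attaining the resulting spectral gap `2n`, so it is an eigenvector of `L` and its mixed
differences vanish. Thus the effect of `(a b)` on the indicator depends only on the colours at `a`
and `b`. Since every colour occurs twice, two disjoint influential transpositions could be made
influential at a common point, which is impossible for a `{0,1}`-valued function. Hence the
influential transpositions all pass through one coordinate `j`, and the set depends only on the
colour at `j`.
-/

open Finset

noncomputable section

/-- The multislice: vectors in `[ℓ]^n` whose colour counts are given by `κ`. -/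
def multislice (ℓ n : ℕ) (κ : Fin ℓ → ℕ) : Finset (Fin n → Fin ℓ) :=
  Finset.univ.filter fun u => ∀ i, (Finset.univ.filter fun j => u j = i).card = κ i

/-- Expectation with respect to the uniform measure on the multislice. -/
def msExp (ℓ n : ℕ) (κ : Fin ℓ → ℕ) (f : (Fin n → Fin ℓ) → ℝ) : ℝ :=
  (∑ u ∈ multislice ℓ n κ, f u) / ((multislice ℓ n κ).card : ℝ)

/-- The indicator variable `x_{ji}`. -/
def xvar (ℓ n : ℕ) (j : Fin n) (i : Fin ℓ) (u : Fin n → Fin ℓ) : ℝ :=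
  if u j = i then 1 else 0

/-- A function on the multislice has degree one if it is of the form
`c + ∑_j ∑_i c_{ji} x_{ji}`. -/
def degreeOne (ℓ n : ℕ) (κ : Fin ℓ → ℕ) (f : (Fin n → Fin ℓ) → ℝ) : Prop :=
  ∃ (c : ℝ) (coef : Fin n → Fin ℓ → ℝ), ∀ u ∈ multislice ℓ n κ,
    f u = c + ∑ j, ∑ i, coef j i * xvar ℓ n j i u

/-- Distance of a real number to the set `{0,1}`. -/
def dist01 (x : ℝ) : ℝ := min |x| |x - 1|

/-- A function is Boolean on the multislice if it takes values in `{0,1}` there. -/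
def booleanOn (ℓ n : ℕ) (κ : Fin ℓ → ℕ) (g : (Fin n → Fin ℓ) → ℝ) : Prop :=
  ∀ u ∈ multislice ℓ n κ, g u = 0 ∨ g u = 1

/-- A dictator: a function depending on at most one coordinate. -/
def dictator (ℓ n : ℕ) (κ : Fin ℓ → ℕ) (g : (Fin n → Fin ℓ) → ℝ) : Prop :=
  ∃ j : Fin n, ∀ u ∈ multislice ℓ n κ, ∀ v ∈ multislice ℓ n κ, u j = v j → g u = g v

/-- The volume `|A|/|M_κ|` of a subset of the multislice. -/
def msVol (ℓ n : ℕ) (κ : Fin ℓ → ℕ) (A : Finset (Fin n → Fin ℓ)) : ℝ :=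
  (A.card : ℝ) / ((multislice ℓ n κ).card : ℝ)

/-- The edge expansion `Φ(A)`: the probability that swapping two distinct coordinates (chosen
uniformly at random) of a uniformly random element of `A` gives an element outside `A`. -/
def msExpansion (ℓ n : ℕ) (A : Finset (Fin n → Fin ℓ)) : ℝ :=
  (∑ u ∈ A, ((Finset.univ.filter fun q : Fin n × Fin n =>
      q.1 ≠ q.2 ∧ (u ∘ Equiv.swap q.1 q.2) ∉ A).card : ℝ)) /
    ((A.card : ℝ) * ((n : ℝ) * ((n : ℝ) - 1)))

section SpectralGap

open scoped InnerProductSpace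

theorem apply_eq_smul_of_spectral_gap {E : Type*} [NormedAddCommGroup E] [InnerProductSpace ℝ E]
    [FiniteDimensional ℝ E] {T : E →ₗ[ℝ] E} (hT : T.IsPositive) {c : ℝ}
    (hgap : ∀ x, c * ⟪T x, x⟫_ℝ ≤ ‖T x‖ ^ 2) {x : E} (hx : x ∈ (LinearMap.ker T)ᗮ)
    (heq : ⟪T x, x⟫_ℝ = c * ‖x‖ ^ 2) : T x = c • x := by
  let b := hT.isSymmetric.eigenvectorBasis rfl
  let ev := hT.isSymmetric.eigenvalues rfl
  have hTb (i) : T (b i) = ev i • b i := hT.isSymmetric.apply_eigenvectorBasis rfl i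
  have hcoeff (i) : ⟪b i, T x⟫_ℝ = ev i * ⟪b i, x⟫_ℝ := by
    rw [← hT.isSymmetric, hTb, real_inner_smul_left]
  have hnonneg (i) : 0 ≤ (ev i - c) * ⟪b i, x⟫_ℝ ^ 2 := by
    rcases (hT.nonneg_eigenvalues rfl i : 0 ≤ ev i).eq_or_lt with hzero | hpos
    · have hker : b i ∈ LinearMap.ker T := by
        rw [LinearMap.mem_ker, hTb, show ev i = 0 from hzero.symm, zero_smul]
      simp [Submodule.inner_right_of_mem_orthogonal hker hx]
    · have hgap_i := hgap (b i)
      rw [hTb, real_inner_smul_left, real_inner_self_eq_norm_sq, norm_smul, b.norm_eq_one,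
        Real.norm_eq_abs, mul_one, sq_abs] at hgap_i
      have : c ≤ ev i := by nlinarith
      exact mul_nonneg (sub_nonneg.2 this) (sq_nonneg _)
  have hsum : ∑ i, (ev i - c) * ⟪b i, x⟫_ℝ ^ 2 = 0 := by
    simp_rw [sub_mul, sum_sub_distrib, ← mul_sum]
    rw [b.sum_sq_inner_right, ← heq, ← b.sum_inner_mul_inner, sub_eq_zero]
    exact sum_congr rfl fun i _ => by rw [real_inner_comm (b i) (T x), hcoeff]; ring
  have hterm (i) : (ev i - c) * ⟪b i, x⟫_ℝ ^ 2 = 0 :=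
    (sum_eq_zero_iff_of_nonneg fun i _ => hnonneg i).1 hsum i (mem_univ i)
  refine b.repr.injective (PiLp.ext fun i => ?_)
  rw [b.repr_apply_apply, b.repr_apply_apply, hcoeff, real_inner_smul_right]
  rcases mul_eq_zero.1 (hterm i) with h | h
  · rw [sub_eq_zero.1 h]
  · rw [pow_eq_zero_iff two_ne_zero |>.1 h, mul_zero, mul_zero]

end SpectralGap

section IteratedSums

variable {ι : Type*} [Fintype ι]

theorem sum_sum_sum_rotate {M : Type*} [AddCommMonoid M] (F : ι → ι → ι → M) :
    ∑ a, ∑ b, ∑ c, F b c a = ∑ a, ∑ b, ∑ c, F a b c := by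
  rw [sum_comm]
  exact sum_congr rfl fun _ _ => sum_comm

theorem sum_sum_sum_le_of_cyclic {F G : ι → ι → ι → ℝ}
    (h : ∀ a b c, F a b c + F b c a + F c a b ≤ G a b c + G b c a + G c a b) :
    ∑ a, ∑ b, ∑ c, F a b c ≤ ∑ a, ∑ b, ∑ c, G a b c := by
  have key : ∑ a, ∑ b, ∑ c, (F a b c + F b c a + F c a b) ≤
      ∑ a, ∑ b, ∑ c, (G a b c + G b c a + G c a b) :=
    sum_le_sum fun a _ => sum_le_sum fun b _ => sum_le_sum fun c _ => h a b c
  have rotate_twice (K : ι → ι → ι → ℝ) :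
      ∑ a, ∑ b, ∑ c, K c a b = ∑ a, ∑ b, ∑ c, K a b c := by
    rw [sum_sum_sum_rotate fun a b c => K b c a, sum_sum_sum_rotate K]
  simp only [sum_add_distrib] at key
  rw [sum_sum_sum_rotate F, sum_sum_sum_rotate G, rotate_twice F, rotate_twice G] at key
  linarith

theorem sum_sum_eq_sum_compl_pair_add [DecidableEq ι] {R : Type*} [CommRing R] {F : ι → ι → R}
    (hsymm : ∀ c d, F c d = F d c) (hdiag : ∀ c, F c c = 0) {a b : ι} (hab : a ≠ b) :
    ∑ c, ∑ d, F c d = ∑ c ∈ {a, b}ᶜ, ∑ d ∈ {a, b}ᶜ, F c d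
      + 2 * (∑ d, F a d + ∑ d, F b d) - 2 * F a b := by
  have split (G : ι → R) : ∑ c, G c = ∑ c ∈ {a, b}ᶜ, G c + (G a + G b) := by
    rw [← sum_pair hab, sum_compl_add_sum]
  have hout (c : ι) : ∑ d ∈ {a, b}ᶜ, F c d = ∑ d, F c d - (F a c + F b c) := by
    rw [split (F c), hsymm a c, hsymm b c, add_sub_cancel_right]
  have hcols (x : ι) : ∑ c ∈ {a, b}ᶜ, F x c = ∑ c, F x c - (F x a + F x b) := by
    rw [split (F x), add_sub_cancel_right]
  simp_rw [hout, sum_sub_distrib, sum_add_distrib, hcols, split fun c => ∑ d, F c d, hdiag,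
    hsymm b a]
  ring

end IteratedSums

section SwapLaplacian

open Equiv
open scoped InnerProductSpace

variable {E : Type*} [NormedAddCommGroup E] [InnerProductSpace ℝ E]

section Orthogonal

variable {G : Type*} [Group G] (ρ : G →* E ≃ₗᵢ[ℝ] E)

theorem map_mul_apply (s t : G) (v : E) : ρ (s * t) v = ρ s (ρ t v) := by
  rw [map_mul, LinearIsometryEquiv.coe_mul, Function.comp_apply]

theorem inner_map_map_eq_inner_map_inv_mul (s t : G) (v w : E) :
    ⟪ρ s v, ρ t w⟫_ℝ = ⟪v, ρ (s⁻¹ * t) w⟫_ℝ := by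
  rw [← (ρ s).inner_map_map v, ← map_mul_apply, mul_inv_cancel_left]

theorem inner_map_inv_self (s : G) (v : E) : ⟪v, ρ s⁻¹ v⟫_ℝ = ⟪v, ρ s v⟫_ℝ := by
  rw [← mul_one s⁻¹, ← inner_map_map_eq_inner_map_inv_mul, map_one, LinearIsometryEquiv.coe_one,
    id, real_inner_comm]

end Orthogonal

-- `x - t x + s t x` is half of the antisymmetrization of `x`; its squared norm is nonnegative.
theorem two_mul_inner_le_norm_sq_of_braid (s t : E ≃ₗᵢ[ℝ] E) {x : E} (hx : s x = -x)
    (hst : s (t (s x)) = t (s (t x))) : 2 * ⟪x, t x⟫_ℝ ≤ ‖x‖ ^ 2 := by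
  have h₁ : ⟪x, s (t x)⟫_ℝ = -⟪x, t x⟫_ℝ := by
    rw [← s.inner_map_map x (t x), hx, inner_neg_left, neg_neg]
  have h₂ : ⟪t x, s (t x)⟫_ℝ = ⟪x, t x⟫_ℝ := by
    have : s (t x) = -t (s (t x)) := by rw [← hst, hx, map_neg, map_neg, neg_neg]
    rw [this, inner_neg_right, t.inner_map_map, h₁, neg_neg]
  have hnonneg : 0 ≤ ‖x - t x + s (t x)‖ ^ 2 := sq_nonneg _
  rw [norm_add_sq_real, norm_sub_sq_real, inner_sub_left, h₁, h₂, s.norm_map, t.norm_map]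
    at hnonneg
  linarith

variable {ι : Type*} [DecidableEq ι] (ρ : Perm ι →* E ≃ₗᵢ[ℝ] E)

/-- The difference operator `v ↦ v - (a b) v` of a transposition, in an orthogonal representation
of the symmetric group. -/
def swapDiff (a b : ι) : E →ₗ[ℝ] E :=
  LinearMap.id - (ρ (swap a b)).toLinearEquiv.toLinearMap

theorem swapDiff_apply (a b : ι) (v : E) : swapDiff ρ a b v = v - ρ (swap a b) v := rfl

theorem swapDiff_self (a : ι) : swapDiff ρ a a = 0 := by
  ext v
  simp [swapDiff_apply, ← Perm.one_def]

theorem swapDiff_comm (a b : ι) : swapDiff ρ a b = swapDiff ρ b a := by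
  rw [swapDiff, swap_comm, swapDiff]

theorem swapDiff_swapDiff_self (a b : ι) (v : E) :
    swapDiff ρ a b (swapDiff ρ a b v) = (2 : ℝ) • swapDiff ρ a b v := by
  have : ρ (swap a b) (ρ (swap a b) v) = v := by
    rw [← map_mul_apply, swap_mul_self, map_one, LinearIsometryEquiv.coe_one, id]
  rw [swapDiff_apply ρ a b v, swapDiff_apply, map_sub, this, two_smul]
  abel

theorem swapDiff_isSymmetric (a b : ι) : (swapDiff ρ a b).IsSymmetric := fun v w => by
  have h := inner_map_map_eq_inner_map_inv_mul ρ (swap a b) 1 v w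
  rw [map_one, LinearIsometryEquiv.coe_one, id, swap_inv, mul_one] at h
  rw [swapDiff_apply, swapDiff_apply, inner_sub_left, inner_sub_right, h]

theorem two_mul_inner_swapDiff_self (a b : ι) (v : E) :
    2 * ⟪swapDiff ρ a b v, v⟫_ℝ = ‖swapDiff ρ a b v‖ ^ 2 := by
  rw [← real_inner_self_eq_norm_sq, ← swapDiff_isSymmetric ρ a b (swapDiff ρ a b v),
    swapDiff_swapDiff_self, real_inner_smul_left]

theorem swapDiff_isPositive (a b : ι) : (swapDiff ρ a b).IsPositive :=
  ⟨swapDiff_isSymmetric ρ a b, fun v => by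
    have := two_mul_inner_swapDiff_self ρ a b v
    rw [RCLike.re_to_real]
    linarith [sq_nonneg ‖swapDiff ρ a b v‖]⟩

theorem swapDiff_swapDiff_comm {a b c d : ι} (hca : c ≠ a) (hcb : c ≠ b) (hda : d ≠ a)
    (hdb : d ≠ b) (v : E) :
    swapDiff ρ a b (swapDiff ρ c d v) = swapDiff ρ c d (swapDiff ρ a b v) := by
  have hcomm : swap a b * swap c d = swap c d * swap a b := by
    ext x
    simp only [Perm.mul_apply, swap_apply_def]
    grind
  simp only [swapDiff_apply, map_sub, ← map_mul_apply, hcomm]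
  abel

theorem four_mul_inner_swapDiff_of_disjoint {a b c d : ι} (hca : c ≠ a) (hcb : c ≠ b)
    (hda : d ≠ a) (hdb : d ≠ b) (v : E) :
    4 * ⟪swapDiff ρ a b v, swapDiff ρ c d v⟫_ℝ = ‖swapDiff ρ a b (swapDiff ρ c d v)‖ ^ 2 := by
  have hcomm := swapDiff_swapDiff_comm ρ hca hcb hda hdb
  calc 4 * ⟪swapDiff ρ a b v, swapDiff ρ c d v⟫_ℝ
      = ⟪swapDiff ρ a b (swapDiff ρ a b v), swapDiff ρ c d (swapDiff ρ c d v)⟫_ℝ := by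
        rw [swapDiff_swapDiff_self, swapDiff_swapDiff_self, real_inner_smul_left,
          real_inner_smul_right]
        ring
    _ = ⟪swapDiff ρ c d (swapDiff ρ a b v), swapDiff ρ a b (swapDiff ρ c d v)⟫_ℝ := by
        rw [← swapDiff_isSymmetric, ← hcomm, swapDiff_isSymmetric]
    _ = ‖swapDiff ρ a b (swapDiff ρ c d v)‖ ^ 2 := by
        rw [← hcomm, real_inner_self_eq_norm_sq]

theorem inner_swapDiff_swapDiff (a b c d : ι) (v : E) :
    ⟪swapDiff ρ a b v, swapDiff ρ c d v⟫_ℝ = ‖v‖ ^ 2 - ⟪v, ρ (swap a b) v⟫_ℝ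
      - ⟪v, ρ (swap c d) v⟫_ℝ + ⟪v, ρ (swap a b * swap c d) v⟫_ℝ := by
  rw [swapDiff_apply, swapDiff_apply, inner_sub_left, inner_sub_right, inner_sub_right,
    inner_map_map_eq_inner_map_inv_mul, swap_inv, real_inner_self_eq_norm_sq, real_inner_comm v]
  ring

theorem swap_mul_swap_mul_swap_eq_swap {a b c : ι} (hbc : b ≠ c) (hca : c ≠ a) :
    swap a b * swap b c * swap a b = swap c a := by
  rw [swap_comm a b, swap_comm b c, swap_mul_swap_mul_swap hbc.symm hca, swap_comm]

theorem inner_map_swap_add_le_of_triangle {a b c : ι} (hab : a ≠ b) (hbc : b ≠ c) (hca : c ≠ a)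
    (v : E) :
    ⟪v, ρ (swap a b) v⟫_ℝ + ⟪v, ρ (swap b c) v⟫_ℝ + ⟪v, ρ (swap c a) v⟫_ℝ ≤
      ‖v‖ ^ 2 + 2 * ⟪v, ρ (swap a b * swap b c) v⟫_ℝ := by
  have hconj := swap_mul_swap_mul_swap_eq_swap hbc hca
  have hbraid : swap a b * swap b c * swap a b = swap b c * swap a b * swap b c := by
    rw [hconj, swap_mul_swap_mul_swap hab hca.symm]
  have hneg : ρ (swap a b) (swapDiff ρ a b v) = -swapDiff ρ a b v := by
    simp [swapDiff_apply, ← map_mul_apply]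
  have hinv := inner_map_inv_self ρ (swap a b * swap b c) v
  have h := two_mul_inner_le_norm_sq_of_braid (ρ (swap a b)) (ρ (swap b c)) hneg
    (by simp only [← map_mul_apply, ← mul_assoc, hbraid])
  rw [← two_mul_inner_swapDiff_self] at h
  simp only [swapDiff_apply, map_sub, inner_sub_left, inner_sub_right, ← map_mul_apply,
    inner_map_map_eq_inner_map_inv_mul, swap_inv, ← mul_assoc, hconj, real_inner_comm,
    real_inner_self_eq_norm_sq] at h
  rw [mul_inv_rev, swap_inv, swap_inv] at hinv
  linarith

theorem norm_sq_swapDiff_add_le_of_triangle {a b c : ι} (hab : a ≠ b) (hbc : b ≠ c) (hca : c ≠ a)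
    (v : E) :
    ‖swapDiff ρ a b v‖ ^ 2 + ‖swapDiff ρ b c v‖ ^ 2 + ‖swapDiff ρ c a v‖ ^ 2 ≤
      4 * (⟪swapDiff ρ a b v, swapDiff ρ a c v⟫_ℝ + ⟪swapDiff ρ b c v, swapDiff ρ b a v⟫_ℝ
        + ⟪swapDiff ρ c a v, swapDiff ρ c b v⟫_ℝ) := by
  have hconj := swap_mul_swap_mul_swap_eq_swap hbc hca
  have hcycle₁ : swap a b * swap c a = swap b c * swap a b := by
    rw [← hconj, mul_assoc, swap_mul_self_mul]
  have hcycle₂ : swap c a * swap b c = swap b c * swap a b := by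
    rw [← swap_mul_swap_mul_swap hab hca.symm, mul_assoc, swap_mul_self, mul_one]
  have hle := inner_map_swap_add_le_of_triangle ρ hab hbc hca v
  have hinv := inner_map_inv_self ρ (swap a b * swap b c) v
  rw [mul_inv_rev, swap_inv, swap_inv] at hinv
  rw [swapDiff_comm ρ a c, swapDiff_comm ρ b a, swapDiff_comm ρ c b]
  simp only [← real_inner_self_eq_norm_sq, inner_swapDiff_swapDiff, swap_mul_self, map_one,
    hcycle₁, hcycle₂, LinearIsometryEquiv.coe_one, id] at hle ⊢
  linarith

-- The conditional terms make the inequality exact on degenerate triples, so that it can be summed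
-- over all triples.
theorem norm_sq_swapDiff_add_le (a b c : ι) (v : E) :
    (‖swapDiff ρ a b v‖ ^ 2 + if b = c then 2 * ‖swapDiff ρ a b v‖ ^ 2 else 0)
      + (‖swapDiff ρ b c v‖ ^ 2 + if c = a then 2 * ‖swapDiff ρ b c v‖ ^ 2 else 0)
      + (‖swapDiff ρ c a v‖ ^ 2 + if a = b then 2 * ‖swapDiff ρ c a v‖ ^ 2 else 0) ≤
    4 * ⟪swapDiff ρ a b v, swapDiff ρ a c v⟫_ℝ + 4 * ⟪swapDiff ρ b c v, swapDiff ρ b a v⟫_ℝ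
      + 4 * ⟪swapDiff ρ c a v, swapDiff ρ c b v⟫_ℝ := by
  rcases eq_or_ne a b with rfl | hab
  · rcases eq_or_ne a c with rfl | hac
    · simp [swapDiff_self]
    · simp only [swapDiff_self, swapDiff_comm ρ c a, hac, hac.symm, LinearMap.zero_apply,
        inner_zero_left, inner_zero_right, real_inner_self_eq_norm_sq, norm_zero, if_true, if_false]
      linarith
  rcases eq_or_ne b c with rfl | hbc
  · simp only [swapDiff_self, swapDiff_comm ρ b a, hab, hab.symm, LinearMap.zero_apply,
      inner_zero_left, inner_zero_right, real_inner_self_eq_norm_sq, norm_zero, if_true, if_false]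
    linarith
  rcases eq_or_ne c a with rfl | hca
  · simp only [swapDiff_self, swapDiff_comm ρ c b, hab, hbc, LinearMap.zero_apply,
      inner_zero_left, inner_zero_right, real_inner_self_eq_norm_sq, norm_zero, if_true, if_false]
    linarith
  have := norm_sq_swapDiff_add_le_of_triangle ρ hab hbc hca v
  simp only [hab, hbc, hca, if_false]
  linarith

variable [Fintype ι]

theorem card_add_two_mul_sum_norm_sq_swapDiff_le (v : E) :
    (Fintype.card ι + 2) * ∑ a, ∑ b, ‖swapDiff ρ a b v‖ ^ 2 ≤
      4 * ∑ a, ∑ b, ∑ c, ⟪swapDiff ρ a b v, swapDiff ρ a c v⟫_ℝ := by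
  have h := sum_sum_sum_le_of_cyclic fun a b c => norm_sq_swapDiff_add_le ρ a b c v
  simp only [sum_add_distrib, sum_const, card_univ, nsmul_eq_mul, sum_ite_eq, mem_univ, if_true,
    ← mul_sum] at h
  linarith

/-- The Laplacian `∑ a, ∑ b, (1 - (a b))` of the Cayley graph generated by the transpositions,
acting in an orthogonal representation. Each unordered pair is counted twice. -/
def swapLaplacian : E →ₗ[ℝ] E := ∑ a, ∑ b, swapDiff ρ a b

theorem swapLaplacian_apply (v : E) :
    swapLaplacian ρ v = ∑ a, ∑ b, swapDiff ρ a b v := by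
  simp only [swapLaplacian, LinearMap.sum_apply]

theorem swapLaplacian_isPositive : (swapLaplacian ρ).IsPositive :=
  LinearMap.isPositive_sum _ fun a _ => LinearMap.isPositive_sum _ fun b _ =>
    swapDiff_isPositive ρ a b

theorem two_mul_inner_swapLaplacian_self (v : E) :
    2 * ⟪swapLaplacian ρ v, v⟫_ℝ = ∑ a, ∑ b, ‖swapDiff ρ a b v‖ ^ 2 := by
  simp only [swapLaplacian_apply, sum_inner, mul_sum, two_mul_inner_swapDiff_self]

theorem swapDiff_eq_zero_of_swapLaplacian_eq_zero {v : E} (hv : swapLaplacian ρ v = 0)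
    (a b : ι) : swapDiff ρ a b v = 0 := by
  have hsum := two_mul_inner_swapLaplacian_self ρ v
  rw [hv, inner_zero_left, mul_zero] at hsum
  have ha := (sum_eq_zero_iff_of_nonneg fun _ _ => by positivity).1 hsum.symm a (mem_univ a)
  have hab := (sum_eq_zero_iff_of_nonneg fun _ _ => by positivity).1 ha b (mem_univ b)
  simpa using hab

theorem sum_inner_swapDiff_eq (a b : ι) (v : E) :
    ∑ c, ∑ d, ⟪swapDiff ρ a b v, swapDiff ρ c d v⟫_ℝ =
      (∑ c ∈ {a, b}ᶜ, ∑ d ∈ {a, b}ᶜ, ‖swapDiff ρ a b (swapDiff ρ c d v)‖ ^ 2) / 4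
      + 2 * (∑ d, ⟪swapDiff ρ a b v, swapDiff ρ a d v⟫_ℝ
        + ∑ d, ⟪swapDiff ρ b a v, swapDiff ρ b d v⟫_ℝ) - 2 * ‖swapDiff ρ a b v‖ ^ 2 := by
  rcases eq_or_ne a b with rfl | hab
  · simp [swapDiff_self]
  rw [sum_sum_eq_sum_compl_pair_add (fun c d => by rw [swapDiff_comm ρ c d]) (fun c => by
    rw [swapDiff_self, LinearMap.zero_apply, inner_zero_right]) hab, real_inner_self_eq_norm_sq,
    swapDiff_comm ρ b a]
  congr 2
  simp only [sum_div]
  refine sum_congr rfl fun c hc => sum_congr rfl fun d hd => ?_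
  simp only [mem_compl, mem_insert, mem_singleton, not_or] at hc hd
  rw [← four_mul_inner_swapDiff_of_disjoint ρ hc.1 hc.2 hd.1 hd.2,
    mul_div_cancel_left₀ _ four_ne_zero]

theorem norm_sq_swapLaplacian_eq (v : E) :
    ‖swapLaplacian ρ v‖ ^ 2 =
      (∑ a, ∑ b, ∑ c ∈ {a, b}ᶜ, ∑ d ∈ {a, b}ᶜ, ‖swapDiff ρ a b (swapDiff ρ c d v)‖ ^ 2) / 4
      + 4 * (∑ a, ∑ b, ∑ c, ⟪swapDiff ρ a b v, swapDiff ρ a c v⟫_ℝ)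
      - 2 * ∑ a, ∑ b, ‖swapDiff ρ a b v‖ ^ 2 := by
  have hexpand : ‖swapLaplacian ρ v‖ ^ 2 =
      ∑ a, ∑ b, ∑ c, ∑ d, ⟪swapDiff ρ a b v, swapDiff ρ c d v⟫_ℝ := by
    simp only [← real_inner_self_eq_norm_sq, swapLaplacian_apply, sum_inner]
    simp only [inner_sum]
  have hcomm : ∑ a, ∑ b, ∑ c, ⟪swapDiff ρ b a v, swapDiff ρ b c v⟫_ℝ =
      ∑ a, ∑ b, ∑ c, ⟪swapDiff ρ a b v, swapDiff ρ a c v⟫_ℝ := sum_comm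
  simp only [hexpand, sum_inner_swapDiff_eq, sum_sub_distrib, sum_add_distrib, ← mul_sum,
    ← sum_div, hcomm]
  ring

theorem sum_norm_sq_mixedDifferences_add_le (v : E) :
    (∑ a, ∑ b, ∑ c ∈ {a, b}ᶜ, ∑ d ∈ {a, b}ᶜ, ‖swapDiff ρ a b (swapDiff ρ c d v)‖ ^ 2) / 4
      + 2 * Fintype.card ι * ⟪swapLaplacian ρ v, v⟫_ℝ ≤ ‖swapLaplacian ρ v‖ ^ 2 := by
  have := card_add_two_mul_sum_norm_sq_swapDiff_le ρ v
  rw [norm_sq_swapLaplacian_eq]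
  linear_combination this + Fintype.card ι * two_mul_inner_swapLaplacian_self ρ v

theorem gap_swapLaplacian (v : E) :
    2 * Fintype.card ι * ⟪swapLaplacian ρ v, v⟫_ℝ ≤ ‖swapLaplacian ρ v‖ ^ 2 :=
  le_trans (le_add_of_nonneg_left (by positivity)) (sum_norm_sq_mixedDifferences_add_le ρ v)

/-- The second differences of `v` along any two disjoint transpositions vanish. This plays the role
of having degree at most one. -/
def MixedDifferencesVanish (v : E) : Prop :=
  ∀ ⦃a b c d : ι⦄, c ≠ a → c ≠ b → d ≠ a → d ≠ b → swapDiff ρ a b (swapDiff ρ c d v) = 0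

theorem mixedDifferencesVanish_of_norm_sq_eq {v : E}
    (h : ‖swapLaplacian ρ v‖ ^ 2 = 2 * Fintype.card ι * ⟪swapLaplacian ρ v, v⟫_ℝ) :
    MixedDifferencesVanish ρ v := by
  intro a b c d hca hcb hda hdb
  have hle := sum_norm_sq_mixedDifferences_add_le ρ v
  have hsum : ∑ a, ∑ b, ∑ c ∈ {a, b}ᶜ, ∑ d ∈ {a, b}ᶜ,
      ‖swapDiff ρ a b (swapDiff ρ c d v)‖ ^ 2 = 0 :=
    le_antisymm (by linarith) (by positivity)
  have ha := (sum_eq_zero_iff_of_nonneg fun _ _ => by positivity).1 hsum a (mem_univ a)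
  have hab := (sum_eq_zero_iff_of_nonneg fun _ _ => by positivity).1 ha b (mem_univ b)
  have habc := (sum_eq_zero_iff_of_nonneg fun _ _ => by positivity).1 hab c (by simp [hca, hcb])
  have habcd := (sum_eq_zero_iff_of_nonneg fun _ _ => by positivity).1 habc d (by simp [hda, hdb])
  simpa using habcd

theorem mixedDifferencesVanish_of_extremal [FiniteDimensional ℝ E] {v : E}
    (hv : v ∈ (LinearMap.ker (swapLaplacian ρ))ᗮ)
    (heq : ⟪swapLaplacian ρ v, v⟫_ℝ = 2 * Fintype.card ι * ‖v‖ ^ 2) :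
    MixedDifferencesVanish ρ v := by
  have heig := apply_eq_smul_of_spectral_gap (swapLaplacian_isPositive ρ) (gap_swapLaplacian ρ)
    hv heq
  refine mixedDifferencesVanish_of_norm_sq_eq ρ ?_
  rw [← real_inner_self_eq_norm_sq]
  conv_lhs => rw [heig]
  rw [heig, real_inner_smul_right, real_inner_smul_left]

end SwapLaplacian

section ColoringAction

open Equiv
open scoped InnerProductSpace

section Invariance

variable {ι X β : Type*}

/-- The permutations of the coordinates that leave a function of colorings invariant. -/
def invariancePerms (h : (ι → X) → β) : Subgroup (Perm ι) where
  carrier := {σ | ∀ u, h (u ∘ σ) = h u}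
  one_mem' _ := rfl
  mul_mem' {σ τ} hσ hτ u := by rw [Perm.coe_mul, ← Function.comp_assoc, hτ, hσ]
  inv_mem' {σ} hσ u := by rw [← hσ, Function.comp_assoc, ← Perm.coe_mul, inv_mul_cancel,
    Perm.coe_one, Function.comp_id]

theorem mem_invariancePerms {h : (ι → X) → β} {σ : Perm ι} :
    σ ∈ invariancePerms h ↔ ∀ u, h (u ∘ σ) = h u := Iff.rfl

theorem ofSubtype_mem_of_swap_mem [DecidableEq ι] {p : ι → Prop} [DecidablePred p]
    [Finite {i // p i}] {H : Subgroup (Perm ι)} (h : ∀ i j, p i → p j → swap i j ∈ H)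
    (σ : Perm {i // p i}) : Perm.ofSubtype σ ∈ H := by
  induction σ using Perm.swap_induction_on with
  | one => rw [map_one]; exact one_mem H
  | swap_mul σ i j _ ih =>
    rw [map_mul, Perm.ofSubtype_swap_eq]
    exact mul_mem (h i j i.2 j.2) ih

theorem exists_perm_comp_eq_of_card_fiber_eq [Fintype ι] [DecidableEq X] {u v : ι → X}
    (h : ∀ x, #{i | u i = x} = #{i | v i = x}) : ∃ σ : Perm ι, u ∘ σ = v := by
  have hfiber (x : X) : Nonempty ({i // v i = x} ≃ {i // u i = x}) :=
    Fintype.card_eq.1 (by rw [Fintype.card_subtype, Fintype.card_subtype, h])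
  let e (x : X) := (hfiber x).some
  exact ⟨ofFiberEquiv e, funext fun i => ofFiberEquiv_map e i⟩

theorem exists_perm_off_comp_eq [Fintype ι] [DecidableEq ι] [DecidableEq X] {u v : ι → X}
    (h : ∀ x, #{i | u i = x} = #{i | v i = x}) {S : Finset ι} (hS : ∀ i ∈ S, u i = v i) :
    ∃ σ : Perm {i // i ∉ S}, u ∘ Perm.ofSubtype σ = v := by
  have hoff (w : ι → X) (x : X) :
      #{i : {i // i ∉ S} | w i = x} = #{i | w i = x} - #{i ∈ S | w i = x} := by
    rw [← card_sdiff_of_subset (filter_subset_filter _ (subset_univ S)),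
      ← card_map (Function.Embedding.subtype _)]
    congr 1
    ext i
    simp +contextual [and_comm]
  obtain ⟨σ, hσ⟩ := exists_perm_comp_eq_of_card_fiber_eq
    (u := fun i : {i // i ∉ S} => u i) (v := fun i => v i) fun x => by
      have hon : #{i ∈ S | u i = x} = #{i ∈ S | v i = x} :=
        congrArg card (filter_congr fun i hi => by rw [hS i hi])
      rw [hoff, hoff, h, hon]
  refine ⟨σ, funext fun i => ?_⟩
  by_cases hi : i ∈ S
  · rw [Function.comp_apply, Perm.ofSubtype_apply_of_not_mem σ (not_not.2 hi), hS i hi]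
  · rw [Function.comp_apply, Perm.ofSubtype_apply_of_mem σ hi]
    exact congrFun hσ ⟨i, hi⟩

theorem exists_forall_swap_mem_of_disjoint [Fintype ι] [DecidableEq ι] (hι : 4 ≤ Fintype.card ι)
    {H : Subgroup (Perm ι)}
    (hdisj : ∀ ⦃a b c d⦄, c ≠ a → c ≠ b → d ≠ a → d ≠ b → swap a b ∉ H → swap c d ∈ H) :
    ∃ j, ∀ p q, p ≠ j → q ≠ j → swap p q ∈ H := by
  have hfresh (s : Finset ι) (hs : #s ≤ 3) : ∃ x, x ∉ s := by
    by_contra! h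
    have := card_le_card fun x (_ : x ∈ univ) => h x
    rw [card_univ] at this
    omega
  have htrans {p q r : ι} (hpq : swap p q ∈ H) (hqr : swap q r ∈ H) : swap p r ∈ H :=
    SubmonoidClass.swap_mem_trans H hpq hqr
  by_cases! hall : ∀ p q, swap p q ∈ H
  · exact (hfresh ∅ (by simp)).imp fun _ _ p q _ _ => hall p q
  obtain ⟨a, b, hab⟩ := hall
  obtain ⟨c, hc⟩ := hfresh {a, b} (card_le_two.trans (by norm_num))
  obtain ⟨d, hd⟩ := hfresh {a, b, c} card_le_three
  simp only [mem_insert, mem_singleton, not_or] at hc hd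
  have hstar (j : ι) (h : ∀ p ≠ j, swap p c ∈ H) : ∃ j, ∀ p q, p ≠ j → q ≠ j → swap p q ∈ H :=
    ⟨j, fun p q hp hq => htrans (h p hp) (by rw [swap_comm]; exact h q hq)⟩
  have hoff (p : ι) (hpa : p ≠ a) (hpb : p ≠ b) : swap p c ∈ H := hdisj hpa hpb hc.1 hc.2 hab
  by_cases hbc : swap b c ∈ H
  · refine hstar a fun p hpa => ?_
    rcases eq_or_ne p b with rfl | hpb
    exacts [hbc, hoff p hpa hpb]
  · refine hstar b fun p hpb => ?_
    rcases eq_or_ne p a with rfl | hpa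
    · exact htrans (hdisj hpb (Ne.symm hc.1) hd.2.1 hd.2.2 hbc) (hoff d hd.1 hd.2.1)
    · exact hoff p hpa hpb

end Invariance

section Representation

variable {ι X : Type*} [Fintype ι] [DecidableEq ι] [Fintype X]

/-- The action of the permutations of the coordinates on real functions of colorings, by
precomposition. -/
def coordPerm : Perm ι →* EuclideanSpace ℝ (ι → X) ≃ₗᵢ[ℝ] EuclideanSpace ℝ (ι → X) where
  toFun σ := LinearIsometryEquiv.piLpCongrLeft 2 ℝ ℝ (σ.arrowCongr (Equiv.refl X))
  map_one' := rfl
  map_mul' _ _ := LinearIsometryEquiv.ext fun _ => rfl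

theorem swapDiff_coordPerm_apply (a b : ι) (v : EuclideanSpace ℝ (ι → X)) (u : ι → X) :
    swapDiff coordPerm a b v u = v u - v (u ∘ swap a b) := rfl

theorem swapDiff_coordPerm_eq_zero_iff {a b : ι} {v : EuclideanSpace ℝ (ι → X)} :
    swapDiff coordPerm a b v = 0 ↔ swap a b ∈ invariancePerms v := by
  rw [mem_invariancePerms, PiLp.ext_iff]
  exact forall_congr' fun u => sub_eq_zero.trans eq_comm

end Representation

section Indicator

variable {Ω : Type*} [DecidableEq Ω]

/-- The indicator function of a finite set, as a vector of the Euclidean space `ℝ^Ω`. -/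
def indicatorVec (A : Finset Ω) : EuclideanSpace ℝ Ω :=
  WithLp.toLp 2 fun u => if u ∈ A then 1 else 0

theorem indicatorVec_apply (A : Finset Ω) (u : Ω) :
    indicatorVec A u = if u ∈ A then 1 else 0 := rfl

theorem indicatorVec_nonneg (A : Finset Ω) (u : Ω) : 0 ≤ indicatorVec A u := by
  rw [indicatorVec_apply]
  positivity

theorem indicatorVec_le_one (A : Finset Ω) (u : Ω) : indicatorVec A u ≤ 1 := by
  rw [indicatorVec_apply]
  split_ifs <;> norm_num

variable [Fintype Ω]

theorem inner_indicatorVec_right (A : Finset Ω) (v : EuclideanSpace ℝ Ω) :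
    ⟪v, indicatorVec A⟫_ℝ = ∑ u ∈ A, v u := by
  simp [PiLp.inner_apply, indicatorVec_apply]

theorem inner_indicatorVec_of_subset {A M : Finset Ω} (hAM : A ⊆ M) :
    ⟪indicatorVec M, indicatorVec A⟫_ℝ = #A := by
  rw [inner_indicatorVec_right, sum_congr rfl fun u hu => by
    rw [indicatorVec_apply, if_pos (hAM hu)], sum_const, nsmul_eq_mul, mul_one]

theorem norm_sq_indicatorVec_sub_smul {A M : Finset Ω} (hAM : A ⊆ M) {α : ℝ}
    (hα : α * #M = #A) : ‖indicatorVec A - α • indicatorVec M‖ ^ 2 = (1 - α) * #A := by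
  rw [norm_sub_sq_real, norm_smul, mul_pow, ← real_inner_self_eq_norm_sq (indicatorVec A),
    ← real_inner_self_eq_norm_sq (indicatorVec M), real_inner_smul_right,
    real_inner_comm (indicatorVec M),
    inner_indicatorVec_of_subset hAM, inner_indicatorVec_of_subset subset_rfl,
    inner_indicatorVec_of_subset subset_rfl, Real.norm_eq_abs, sq_abs, ← hα]
  ring

end Indicator

section Boundary

variable {ι X : Type*} [Fintype ι] [DecidableEq ι] [DecidableEq X]

theorem exists_mem_comp_swap_notMem {A : Finset (ι → X)} {a b : ι}
    (hab : swap a b ∉ invariancePerms (indicatorVec A)) : ∃ u ∈ A, u ∘ swap a b ∉ A := by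
  by_contra! hclosed
  refine hab (mem_invariancePerms.2 fun u => ?_)
  have hiff : u ∘ swap a b ∈ A ↔ u ∈ A := by
    refine ⟨fun hu => ?_, hclosed u⟩
    simpa [Function.comp_assoc, ← Perm.coe_mul] using hclosed _ hu
  simp only [indicatorVec_apply, hiff]

theorem inner_swapLaplacian_indicatorVec [Fintype X] (A : Finset (ι → X)) :
    ⟪swapLaplacian coordPerm (indicatorVec A), indicatorVec A⟫_ℝ =
      ∑ u ∈ A, (#{q : ι × ι | q.1 ≠ q.2 ∧ u ∘ swap q.1 q.2 ∉ A} : ℝ) := by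
  rw [inner_indicatorVec_right]
  refine sum_congr rfl fun u hu => ?_
  simp only [swapLaplacian_apply, WithLp.ofLp_sum, Finset.sum_apply, swapDiff_coordPerm_apply]
  rw [← sum_product', univ_product_univ, card_filter, Nat.cast_sum]
  refine sum_congr rfl fun q _ => ?_
  rcases eq_or_ne q.1 q.2 with hq | hq
  · simp [hq]
  · by_cases hmem : u ∘ swap q.1 q.2 ∈ A <;> simp [indicatorVec_apply, hu, hq, hmem]

end Boundary

end ColoringAction

section Multislice

open Equiv
open scoped InnerProductSpace

variable {ℓ n : ℕ} {κ : Fin ℓ → ℕ}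

theorem mem_multislice {u : Fin n → Fin ℓ} :
    u ∈ multislice ℓ n κ ↔ ∀ i, #{j | u j = i} = κ i := by
  simp only [multislice, mem_filter_univ]

theorem comp_perm_mem_multislice {u : Fin n → Fin ℓ} (σ : Perm (Fin n)) :
    u ∘ σ ∈ multislice ℓ n κ ↔ u ∈ multislice ℓ n κ := by
  have hcount (i : Fin ℓ) : #{j | (u ∘ σ) j = i} = #{j | u j = i} :=
    card_equiv σ fun j => by simp only [mem_filter_univ, Function.comp_apply]
  simp only [mem_multislice, hcount]

theorem apply_eq_of_agree_on {β : Type*} {h : (Fin n → Fin ℓ) → β} {S : Finset (Fin n)}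
    (hinv : ∀ p q, p ∉ S → q ∉ S → swap p q ∈ invariancePerms h) {u v : Fin n → Fin ℓ}
    (hu : u ∈ multislice ℓ n κ) (hv : v ∈ multislice ℓ n κ) (huv : ∀ j ∈ S, u j = v j) :
    h u = h v := by
  obtain ⟨σ, rfl⟩ := exists_perm_off_comp_eq
    (fun i => (mem_multislice.1 hu i).trans (mem_multislice.1 hv i).symm) huv
  exact (ofSubtype_mem_of_swap_mem hinv σ u).symm

theorem swapDiff_indicatorVec_multislice (a b : Fin n) :
    swapDiff coordPerm a b (indicatorVec (multislice ℓ n κ)) = 0 :=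
  swapDiff_coordPerm_eq_zero_iff.2 fun u => by
    simp only [indicatorVec_apply, comp_perm_mem_multislice]

theorem swapDiff_indicatorVec_sub_smul (A : Finset (Fin n → Fin ℓ)) (α : ℝ) (a b : Fin n) :
    swapDiff coordPerm a b (indicatorVec A - α • indicatorVec (multislice ℓ n κ)) =
      swapDiff coordPerm a b (indicatorVec A) := by
  rw [map_sub, map_smul, swapDiff_indicatorVec_multislice, smul_zero, sub_zero]

theorem indicatorVec_sub_smul_mem_ker_orthogonal {A : Finset (Fin n → Fin ℓ)}
    (hA : A ⊆ multislice ℓ n κ) {α : ℝ} (hα : α * #(multislice ℓ n κ) = #A) :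
    indicatorVec A - α • indicatorVec (multislice ℓ n κ) ∈
      (LinearMap.ker (swapLaplacian (coordPerm (ι := Fin n) (X := Fin ℓ))))ᗮ := by
  refine (Submodule.mem_orthogonal _ _).2 fun v hv => ?_
  have hinv (p q : Fin n) : swap p q ∈ invariancePerms v :=
    swapDiff_coordPerm_eq_zero_iff.1 (swapDiff_eq_zero_of_swapLaplacian_eq_zero _ hv p q)
  rw [inner_sub_right, inner_smul_right, inner_indicatorVec_right, inner_indicatorVec_right]
  rcases (multislice ℓ n κ).eq_empty_or_nonempty with hM | ⟨w, hw⟩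
  · have hA' : A = ∅ := by rwa [hM, subset_empty] at hA
    rw [hA', hM, sum_empty, mul_zero, sub_zero]
  · have hsum {s : Finset (Fin n → Fin ℓ)} (hs : s ⊆ multislice ℓ n κ) :
        ∑ u ∈ s, v u = #s * v w := by
      rw [← nsmul_eq_mul]
      exact sum_eq_card_nsmul fun u hu =>
        apply_eq_of_agree_on (S := ∅) (fun p q _ _ => hinv p q) (hs hu) hw (by simp)
    rw [hsum hA, hsum subset_rfl, ← hα]
    ring

theorem mixedDifferencesVanish_indicatorVec {A : Finset (Fin n → Fin ℓ)}
    (hA : A ⊆ multislice ℓ n κ) {α : ℝ} (hα : α * #(multislice ℓ n κ) = #A)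
    (hboundary : ⟪swapLaplacian coordPerm (indicatorVec A), indicatorVec A⟫_ℝ =
      2 * n * (1 - α) * #A) :
    MixedDifferencesVanish coordPerm (indicatorVec A) := by
  let g := indicatorVec A - α • indicatorVec (multislice ℓ n κ)
  have hLM : swapLaplacian coordPerm (indicatorVec (multislice ℓ n κ)) = 0 := by
    simp only [swapLaplacian_apply, swapDiff_indicatorVec_multislice, sum_const_zero]
  have hLg : swapLaplacian coordPerm g = swapLaplacian coordPerm (indicatorVec A) := by
    rw [map_sub, map_smul, hLM, smul_zero, sub_zero]
  have henergy : ⟪swapLaplacian coordPerm g, g⟫_ℝ = 2 * Fintype.card (Fin n) * ‖g‖ ^ 2 := by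
    rw [hLg, inner_sub_right, real_inner_smul_right, (swapLaplacian_isPositive _).isSymmetric _
      (indicatorVec (multislice ℓ n κ)), hLM, inner_zero_right, hboundary,
      norm_sq_indicatorVec_sub_smul hA hα, Fintype.card_fin]
    ring
  have hg := mixedDifferencesVanish_of_extremal _
    (indicatorVec_sub_smul_mem_ker_orthogonal hA hα) henergy
  intro a b c d hca hcb hda hdb
  rw [← hg hca hcb hda hdb, swapDiff_indicatorVec_sub_smul]

theorem exists_apply_eq_of_apply_ne (hκ : ∀ i, 2 ≤ κ i) {u : Fin n → Fin ℓ}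
    (hu : u ∈ multislice ℓ n κ) {a b : Fin n} (hab : u a ≠ u b) (x : Fin ℓ) :
    ∃ p, p ≠ a ∧ p ≠ b ∧ u p = x := by
  obtain ⟨p, hp, q, hq, hpq⟩ := one_lt_card.1 ((hκ x).trans_eq (mem_multislice.1 hu x).symm)
  rw [mem_filter_univ] at hp hq
  grind

theorem exists_mem_multislice_recolor (hκ : ∀ i, 2 ≤ κ i) {u : Fin n → Fin ℓ}
    (hu : u ∈ multislice ℓ n κ) {a b c d : Fin n} (hab : u a ≠ u b) (hca : c ≠ a) (hcb : c ≠ b)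
    (hda : d ≠ a) (hdb : d ≠ b) (hdc : d ≠ c) {x y : Fin ℓ} (hxy : x ≠ y) :
    ∃ v ∈ multislice ℓ n κ, v a = u a ∧ v b = u b ∧ v c = x ∧ v d = y := by
  obtain ⟨p, hpa, hpb, hpx⟩ := exists_apply_eq_of_apply_ne hκ hu hab x
  let w := u ∘ swap c p
  have hw : w ∈ multislice ℓ n κ := (comp_perm_mem_multislice _).2 hu
  have hwa : w a = u a := by simp [w, swap_apply_of_ne_of_ne hca.symm hpa.symm]
  have hwb : w b = u b := by simp [w, swap_apply_of_ne_of_ne hcb.symm hpb.symm]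
  have hwc : w c = x := by simp [w, hpx]
  obtain ⟨q, hqa, hqb, hqy⟩ := exists_apply_eq_of_apply_ne hκ hw (a := a) (b := b)
    (by rwa [hwa, hwb]) y
  have hqc : q ≠ c := fun h => hxy (by rw [← hwc, ← hqy, h])
  refine ⟨w ∘ swap d q, (comp_perm_mem_multislice _).2 hw, ?_, ?_, ?_, ?_⟩
  · rw [Function.comp_apply, swap_apply_of_ne_of_ne hda.symm hqa.symm, hwa]
  · rw [Function.comp_apply, swap_apply_of_ne_of_ne hdb.symm hqb.symm, hwb]
  · rw [Function.comp_apply, swap_apply_of_ne_of_ne hdc.symm hqc.symm, hwc]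
  · rw [Function.comp_apply, swap_apply_left, hqy]

theorem swapDiff_apply_eq_of_agree {f : EuclideanSpace ℝ (Fin n → Fin ℓ)}
    (hf : MixedDifferencesVanish coordPerm f) {a b : Fin n} {u v : Fin n → Fin ℓ}
    (hu : u ∈ multislice ℓ n κ) (hv : v ∈ multislice ℓ n κ) (ha : u a = v a) (hb : u b = v b) :
    swapDiff coordPerm a b f u = swapDiff coordPerm a b f v := by
  refine apply_eq_of_agree_on (S := {a, b}) (fun p q hp hq => ?_) hu hv (by simp [ha, hb])
  simp only [mem_insert, mem_singleton, not_or] at hp hq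
  exact swapDiff_coordPerm_eq_zero_iff.1
    (hf (Ne.symm hp.1) (Ne.symm hq.1) (Ne.symm hp.2) (Ne.symm hq.2))

theorem swap_mem_invariancePerms_of_disjoint (hκ : ∀ i, 2 ≤ κ i) {A : Finset (Fin n → Fin ℓ)}
    (hA : A ⊆ multislice ℓ n κ) (hmixed : MixedDifferencesVanish coordPerm (indicatorVec A))
    ⦃a b c d : Fin n⦄ (hca : c ≠ a) (hcb : c ≠ b) (hda : d ≠ a) (hdb : d ≠ b)
    (hab : swap a b ∉ invariancePerms (indicatorVec A)) :
    swap c d ∈ invariancePerms (indicatorVec A) := by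
  -- Otherwise, recolor so that both first differences equal `1` at the same point `v`; then the
  -- vanishing of the mixed difference forces `1_A v ≥ 2`.
  by_contra hcd
  have hcolors {a b : Fin n} {u : Fin n → Fin ℓ} (hu : u ∈ A) (hu' : u ∘ swap a b ∉ A) :
      u a ≠ u b := fun h => hu' <| by rwa [comp_swap_eq_update, h, Function.update_eq_self, ← h,
        Function.update_eq_self]
  obtain ⟨u, huA, huab⟩ := exists_mem_comp_swap_notMem hab
  obtain ⟨w, hwA, hwcd⟩ := exists_mem_comp_swap_notMem hcd
  have hdc : d ≠ c := by
    rintro rfl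
    exact hcolors hwA hwcd rfl
  obtain ⟨v, hv, hva, hvb, hvc, hvd⟩ := exists_mem_multislice_recolor hκ (hA huA)
    (hcolors huA huab) hca hcb hda hdb hdc (hcolors hwA hwcd)
  have hdiff_ab : swapDiff coordPerm a b (indicatorVec A) v = 1 := by
    rw [swapDiff_apply_eq_of_agree hmixed hv (hA huA) hva hvb]
    simp [swapDiff_coordPerm_apply, indicatorVec_apply, huA, huab]
  have hdiff_cd : swapDiff coordPerm c d (indicatorVec A) v = 1 := by
    rw [swapDiff_apply_eq_of_agree hmixed hv (hA hwA) hvc hvd]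
    simp [swapDiff_coordPerm_apply, indicatorVec_apply, hwA, hwcd]
  have hdiff_mixed : swapDiff coordPerm a b (swapDiff coordPerm c d (indicatorVec A)) v = 0 := by
    rw [hmixed hca hcb hda hdb, PiLp.zero_apply]
  simp only [swapDiff_coordPerm_apply] at hdiff_ab hdiff_cd hdiff_mixed
  linarith [indicatorVec_le_one A v, indicatorVec_nonneg A ((v ∘ swap a b) ∘ swap c d)]

theorem eq_filter_of_swap_mem_invariancePerms {A : Finset (Fin n → Fin ℓ)}
    (hA : A ⊆ multislice ℓ n κ) {j : Fin n}
    (hj : ∀ p q, p ≠ j → q ≠ j → swap p q ∈ invariancePerms (indicatorVec A)) :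
    A = {u ∈ multislice ℓ n κ | u j ∈ A.image fun w => w j} := by
  ext u
  refine ⟨fun hu => mem_filter.2 ⟨hA hu, mem_image_of_mem _ hu⟩, fun hu => ?_⟩
  obtain ⟨huM, huj⟩ := mem_filter.1 hu
  obtain ⟨w, hw, hwj⟩ := mem_image.1 huj
  have heq : indicatorVec A w = indicatorVec A u :=
    apply_eq_of_agree_on (S := {j}) (by simpa using hj) (hA hw) huM (by simpa using hwj)
  by_contra hu
  simp [indicatorVec_apply, hw, hu] at heq

theorem card_mul_card_filter_apply_mem (κ : Fin ℓ → ℕ) (j : Fin n) (S : Finset (Fin ℓ)) :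
    n * #{u ∈ multislice ℓ n κ | u j ∈ S} = (∑ i ∈ S, κ i) * #(multislice ℓ n κ) := by
  have hcoord (k : Fin n) :
      #{u ∈ multislice ℓ n κ | u k ∈ S} = #{u ∈ multislice ℓ n κ | u j ∈ S} :=
    card_equiv ((swap j k).arrowCongr (Equiv.refl _)) fun u => by
      have hcomp : (swap j k).arrowCongr (Equiv.refl _) u = u ∘ swap j k := rfl
      simp only [mem_filter, hcomp, comp_perm_mem_multislice, Function.comp_apply, swap_apply_left]
  have hcolor {u} (hu : u ∈ multislice ℓ n κ) : #{k | u k ∈ S} = ∑ i ∈ S, κ i := by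
    rw [card_eq_sum_card_fiberwise (f := u) (t := S) fun k hk => by simpa using hk]
    refine sum_congr rfl fun i hi => ?_
    rw [← mem_multislice.1 hu i, filter_filter]
    exact congrArg card (filter_congr fun k _ => by grind)
  calc n * #{u ∈ multislice ℓ n κ | u j ∈ S}
      = ∑ k : Fin n, #{u ∈ multislice ℓ n κ | u k ∈ S} := by simp [hcoord]
    _ = ∑ u ∈ multislice ℓ n κ, #{k | u k ∈ S} := by
        simp only [card_filter]
        exact sum_comm
    _ = (∑ i ∈ S, κ i) * #(multislice ℓ n κ) := by
        rw [sum_congr rfl fun u hu => hcolor hu, sum_const, smul_eq_mul, mul_comm]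

theorem inner_swapLaplacian_eq_of_msExpansion_eq {A : Finset (Fin n → Fin ℓ)} (hn : 2 ≤ n)
    (hne : A.Nonempty) {α : ℝ} (heq : msExpansion ℓ n A = 2 * (1 - α) / ((n : ℝ) - 1)) :
    ⟪swapLaplacian coordPerm (indicatorVec A), indicatorVec A⟫_ℝ = 2 * n * (1 - α) * #A := by
  have hn' : (2 : ℝ) ≤ n := by exact_mod_cast hn
  have hcard : (0 : ℝ) < #A := by exact_mod_cast hne.card_pos
  have hn1 : (n : ℝ) - 1 ≠ 0 := by linarith
  rw [msExpansion, ← inner_swapLaplacian_indicatorVec, div_eq_div_iff (by positivity) hn1] at heq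
  refine mul_right_cancel₀ hn1 (heq.trans ?_)
  ring

end Multislice

/-- If the edge-isoperimetric bound is attained by a set `A` of volume `α ∈ (0,1)` (and all
`κ_i ≥ 2`), then `A = {u : u_j ∈ S}` for some coordinate `j` and some set of colours `S` with
`∑_{i∈S} κ_i = αn`. -/
theorem multislice_isoperimetry_extremal (ℓ n : ℕ) (hℓ : 2 ≤ ℓ) (hn : 4 ≤ n)
    (κ : Fin ℓ → ℕ) (hκ : ∀ i, 2 ≤ κ i) (hsum : ∑ i, κ i = n)
    (A : Finset (Fin n → Fin ℓ)) (hA : A ⊆ multislice ℓ n κ) (hne : A.Nonempty)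
    (α : ℝ) (hα : msVol ℓ n κ A = α) (hα0 : 0 < α) (hα1 : α < 1)
    (heq : msExpansion ℓ n A = 2 * (1 - α) / ((n : ℝ) - 1)) :
    ∃ (j : Fin n) (S : Finset (Fin ℓ)),
      (∑ i ∈ S, (κ i : ℝ)) = α * n ∧
      A = (multislice ℓ n κ).filter fun u => u j ∈ S := by
  have hM : (#(multislice ℓ n κ) : ℝ) ≠ 0 := by exact_mod_cast (hne.mono hA).card_ne_zero
  have hcard : α * #(multislice ℓ n κ) = #A := by rw [← hα, msVol, div_mul_cancel₀ _ hM]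
  have hmixed : MixedDifferencesVanish coordPerm (indicatorVec A) :=
    mixedDifferencesVanish_indicatorVec hA hcard
      (inner_swapLaplacian_eq_of_msExpansion_eq (by lia) hne heq)
  obtain ⟨j, hj⟩ := exists_forall_swap_mem_of_disjoint (by rwa [Fintype.card_fin])
    (swap_mem_invariancePerms_of_disjoint hκ hA hmixed)
  have hfilter := eq_filter_of_swap_mem_invariancePerms hA hj
  refine ⟨j, A.image fun u => u j, mul_right_cancel₀ hM ?_, hfilter⟩
  have hcount := card_mul_card_filter_apply_mem κ j (A.image fun u => u j)
  rw [← hfilter] at hcount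
  have hcount' : (n : ℝ) * #A = (∑ i ∈ A.image fun u => u j, (κ i : ℝ)) * #(multislice ℓ n κ) :=
    mod_cast hcount
  rw [← hcount', ← hcard]
  ring
end
end

section
/- Let M_κ be a multislice on n ≥ 4 points and let A ⊆ M_κ be nonempty with vol(A) = α. Then Φ(A) ≥ 2(1−α)/(n−1) + (2(n−2)/(n(n−1)))·‖(1_A)^{>1}‖²/α, where 1_A is the indicator function of A. -/
open Finset

noncomputable section

/-!
Let `K` be the sum of the `n²` operators `f ↦ f ∘ (a b)` on `L²(M_κ)`, the diagonal `a = b`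
included. Up to normalisation, `⟪K 1_A, 1_A⟫` is the probability of staying in `A`, so `Φ(A)` is
bounded below by bounding the quadratic form of `K` above. On constants `K` is `n²`, on functions
of degree one with mean zero it is `n(n-2)`, and on functions orthogonal to degree one its
quadratic form is at most `(n-2)²`.

Only the last bound needs an idea. It holds in every orthogonal representation of a symmetric
group, with functions of one coordinate replaced by vectors fixed by a point stabiliser, and is
proved by induction on the number `N` of points. Let `v` be an eigenvector of `K` orthogonal to
degree one with eigenvalue above `(N-2)²`, and let `x` be fixed by the stabiliser of two points
`j, k`. Against `v`, the operator `K` acts on `x ± (j k) x` as the scalars `(N-2)²` and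
`(N-2)² - 4`, so `v` is orthogonal to `x`. Hence `v` is orthogonal to degree one for the symmetric
group of the complement of any point, where the induction hypothesis applies; averaging over the
point removed contradicts the size of the eigenvalue.
-/

section OrthogonalRepresentation

open Equiv
open scoped InnerProductSpace

lemma inner_map_self_le_of_eigenvalue_le {F : Type*} [NormedAddCommGroup F]
    [InnerProductSpace ℝ F] [FiniteDimensional ℝ F] {K : F →ₗ[ℝ] F} (hK : K.IsSymmetric) {c : ℝ}
    (hc : ∀ v μ, v ≠ 0 → K v = μ • v → μ ≤ c) (x : F) : ⟪K x, x⟫_ℝ ≤ c * ‖x‖ ^ 2 := by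
  let b := hK.eigenvectorBasis rfl
  have hb (i) : K (b i) = hK.eigenvalues rfl i • b i := hK.apply_eigenvectorBasis rfl i
  rw [← b.sum_inner_mul_inner (K x) x, ← b.sum_sq_norm_inner_right x, Finset.mul_sum]
  refine Finset.sum_le_sum fun i _ => ?_
  rw [hK x (b i), hb, real_inner_smul_right, real_inner_comm, mul_assoc, ← sq, Real.norm_eq_abs,
    sq_abs]
  exact mul_le_mul_of_nonneg_right (hc _ _ (b.orthonormal.ne_zero i) (hb i)) (sq_nonneg _)

variable {β E : Type*} [NormedAddCommGroup E] [InnerProductSpace ℝ E]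
  (ρ : Perm β →* (E ≃ₗᵢ[ℝ] E)) {S T : Finset β} {j k : β} {x v : E}

/-- The vectors fixed by the symmetric group of `S`, that is, by every permutation fixing each
point outside `S`. -/
def fixedVectors (S : Finset β) : Submodule ℝ E where
  carrier := {x | ∀ σ : Perm β, (∀ b ∉ S, σ b = b) → ρ σ x = x}
  add_mem' hx hy σ hσ := by rw [map_add, hx σ hσ, hy σ hσ]
  zero_mem' _ _ := map_zero _
  smul_mem' c x hx σ hσ := by rw [map_smul, hx σ hσ]

variable {ρ}

lemma fixedVectors_anti (h : S ⊆ T) : fixedVectors ρ T ≤ fixedVectors ρ S :=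
  fun _ hx σ hσ => hx σ fun b hb => hσ b fun hbS => hb (h hbS)

lemma fixedVectors_eq_top_of_card_le_one (h : #S ≤ 1) : fixedVectors ρ S = ⊤ := by
  refine eq_top_iff.2 fun x _ σ hσ => ?_
  have hσ_one : σ = 1 := by
    ext b
    by_contra hb
    have hbS : b ∈ S := by_contra fun h => hb (hσ b h)
    have hσbS : σ b ∈ S := by_contra fun h => hb (σ.injective (hσ _ h))
    exact hb (Finset.card_le_one.1 h _ hσbS _ hbS)
  rw [hσ_one, map_one, LinearIsometryEquiv.coe_one, id]

variable (ρ) [DecidableEq β]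

/-- The span of the vectors fixed by the stabiliser in the symmetric group of `T` of some point
of `T`: the abstract form of the space of functions of degree one. -/
def degreeOneSpace (T : Finset β) : Submodule ℝ E :=
  ⨆ j ∈ T, fixedVectors ρ (T.erase j)

/-- The sum of the operators `ρ (a b)` over ordered pairs in `T`. The `|T|` diagonal pairs are
included, each contributing the identity. -/
def swapSum (T : Finset β) : E →ₗ[ℝ] E :=
  ∑ a ∈ T, ∑ b ∈ T, (ρ (swap a b)).toLinearEquiv

lemma swapSum_apply (T : Finset β) (x : E) :
    swapSum ρ T x = ∑ a ∈ T, ∑ b ∈ T, ρ (swap a b) x := by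
  simp [swapSum]

lemma apply_swap_apply_swap (a b : β) (x : E) : ρ (swap a b) (ρ (swap a b) x) = x := by
  have hmul := map_mul ρ (swap a b) (swap a b)
  rw [swap_mul_self, map_one] at hmul
  exact DFunLike.congr_fun hmul.symm x

lemma inner_swap_left (a b : β) (x y : E) : ⟪ρ (swap a b) x, y⟫_ℝ = ⟪x, ρ (swap a b) y⟫_ℝ := by
  rw [← (ρ (swap a b)).inner_map_map, apply_swap_apply_swap]

lemma swapSum_isSymmetric (T : Finset β) : (swapSum ρ T).IsSymmetric := fun x y => by
  simp only [swapSum_apply, sum_inner, inner_sum, inner_swap_left]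

variable {ρ}

lemma swap_apply_eq_self (hx : x ∈ fixedVectors ρ S) {a b : β} (ha : a ∈ S) (hb : b ∈ S) :
    ρ (swap a b) x = x :=
  hx _ fun _ hc => swap_apply_of_ne_of_ne (ne_of_mem_of_not_mem ha hc).symm
    (ne_of_mem_of_not_mem hb hc).symm

lemma swap_mem_fixedVectors (hj : j ∉ S) (hk : k ∉ S) (hx : x ∈ fixedVectors ρ S) :
    ρ (swap j k) x ∈ fixedVectors ρ S := fun σ hσ => by
  have hcomm : σ * swap j k = swap j k * σ := by
    rw [mul_swap_eq_swap_mul, hσ j hj, hσ k hk]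
  calc ρ σ (ρ (swap j k) x) = ρ (σ * swap j k) x := by rw [map_mul]; rfl
    _ = ρ (swap j k) (ρ σ x) := by rw [hcomm, map_mul]; rfl
    _ = ρ (swap j k) x := by rw [hx σ hσ]

lemma fixedVectors_erase_le_degreeOneSpace (hj : j ∈ T) :
    fixedVectors ρ (T.erase j) ≤ degreeOneSpace ρ T :=
  le_iSup₂_of_le j hj le_rfl

lemma fixedVectors_le_degreeOneSpace (hT : T.Nonempty) :
    fixedVectors ρ T ≤ degreeOneSpace ρ T :=
  let ⟨_, hj⟩ := hT
  (fixedVectors_anti (erase_subset _ _)).trans (fixedVectors_erase_le_degreeOneSpace hj)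

lemma degreeOneSpace_eq_top_of_card_le_two (hT : T.Nonempty) (h : #T ≤ 2) :
    degreeOneSpace ρ T = ⊤ := by
  obtain ⟨j, hj⟩ := hT
  refine top_unique (le_trans ?_ (fixedVectors_erase_le_degreeOneSpace hj))
  rw [fixedVectors_eq_top_of_card_le_one (by rw [card_erase_of_mem hj]; lia)]

lemma mem_orthogonal_degreeOneSpace :
    v ∈ (degreeOneSpace ρ T)ᗮ ↔ ∀ j ∈ T, v ∈ (fixedVectors ρ (T.erase j))ᗮ := by
  have hiInf : (degreeOneSpace ρ T)ᗮ = ⨅ j ∈ T, (fixedVectors ρ (T.erase j))ᗮ :=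
    (Submodule.orthogonal_gc ℝ E).l_iSup₂
  simp only [hiInf, Submodule.mem_iInf]

-- The transpositions `(j m)` with `m ∈ T` represent the cosets of the stabiliser of `j`.
lemma sum_swap_mem_fixedVectors (hj : j ∈ T) (hx : x ∈ fixedVectors ρ (T.erase j)) :
    ∑ m ∈ T, ρ (swap j m) x ∈ fixedVectors ρ T := by
  intro σ hσ
  have hσT (m : β) : m ∈ T ↔ σ m ∈ T := by
    refine not_iff_not.1 ⟨fun h => (hσ m h).symm ▸ h, fun h => ?_⟩
    exact σ.injective (hσ _ h) ▸ h
  have hcoset (m) (hm : m ∈ T) : ρ σ (ρ (swap j m) x) = ρ (swap j (σ m)) x := by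
    have hfix : ρ (swap j (σ m) * σ * swap j m) x = x := by
      refine hx _ fun b hb => ?_
      obtain rfl | hbj := eq_or_ne b j
      · simp
      have hbT : b ∉ T := fun h => hb (mem_erase.2 ⟨hbj, h⟩)
      rw [Perm.mul_apply, swap_apply_of_ne_of_ne hbj (ne_of_mem_of_not_mem hm hbT).symm,
        Perm.mul_apply, hσ b hbT,
        swap_apply_of_ne_of_ne hbj (ne_of_mem_of_not_mem ((hσT m).1 hm) hbT).symm]
    calc ρ σ (ρ (swap j m) x) = ρ (swap j (σ m) * (swap j (σ m) * σ * swap j m)) x := by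
          rw [mul_assoc, swap_mul_self_mul, map_mul]; rfl
      _ = ρ (swap j (σ m)) (ρ (swap j (σ m) * σ * swap j m) x) := by rw [map_mul]; rfl
      _ = ρ (swap j (σ m)) x := by rw [hfix]
  rw [map_sum, sum_congr rfl hcoset]
  exact sum_equiv σ hσT fun _ _ => rfl

lemma swapSum_eq_swapSum_erase_add (hj : j ∈ T) (x : E) :
    swapSum ρ T x =
      swapSum ρ (T.erase j) x + (2 : ℝ) • ∑ m ∈ T, ρ (swap j m) x - x := by
  have hdiag : ρ (swap j j) x = x := by rw [swap_self]; exact DFunLike.congr_fun (map_one ρ) x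
  simp only [swapSum_apply, ← add_sum_erase T _ hj, sum_add_distrib, hdiag, swap_comm _ j]
  module

lemma sum_swapSum_erase (T : Finset β) (x : E) :
    ∑ j ∈ T, swapSum ρ (T.erase j) x = (#T - 2 : ℝ) • swapSum ρ T x + (#T : ℝ) • x := by
  have herase (j) (hj : j ∈ T) : swapSum ρ (T.erase j) x =
      swapSum ρ T x - (2 : ℝ) • ∑ m ∈ T, ρ (swap j m) x + x := by
    rw [swapSum_eq_swapSum_erase_add hj]
    module
  rw [sum_congr rfl herase, sum_add_distrib, sum_sub_distrib, ← smul_sum, ← swapSum_apply]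
  simp only [sum_const, ← Nat.cast_smul_eq_nsmul ℝ]
  module

lemma swapSum_of_mem_fixedVectors (hx : x ∈ fixedVectors ρ T) :
    swapSum ρ T x = ((#T : ℝ) ^ 2) • x := by
  rw [swapSum_apply,
    sum_congr rfl fun a ha => sum_congr rfl fun b hb => swap_apply_eq_self hx ha hb]
  simp only [sum_const, ← Nat.cast_smul_eq_nsmul ℝ, smul_smul, sq]

lemma swapSum_of_mem_fixedVectors_erase (hj : j ∈ T) (hx : x ∈ fixedVectors ρ (T.erase j)) :
    swapSum ρ T x = (#T * (#T - 2) : ℝ) • x + (2 : ℝ) • ∑ m ∈ T, ρ (swap j m) x := by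
  rw [swapSum_eq_swapSum_erase_add hj, swapSum_of_mem_fixedVectors hx, cast_card_erase_of_mem hj]
  module

lemma swapSum_sub_smul_mem_fixedVectors (hx : x ∈ degreeOneSpace ρ T) :
    swapSum ρ T x - (#T * (#T - 2) : ℝ) • x ∈ fixedVectors ρ T := by
  suffices degreeOneSpace ρ T ≤ (fixedVectors ρ T).comap
      (swapSum ρ T - (#T * (#T - 2) : ℝ) • LinearMap.id) from this hx
  refine iSup₂_le fun j hj y hy => ?_
  change swapSum ρ T y - (#T * (#T - 2) : ℝ) • y ∈ fixedVectors ρ T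
  rw [swapSum_of_mem_fixedVectors_erase hj hy, add_sub_cancel_left]
  exact Submodule.smul_mem _ _ (sum_swap_mem_fixedVectors hj hy)

lemma swapSum_mem_orthogonal_fixedVectors (hx : x ∈ (fixedVectors ρ T)ᗮ) :
    swapSum ρ T x ∈ (fixedVectors ρ T)ᗮ := fun y hy => by
  rw [← swapSum_isSymmetric, swapSum_of_mem_fixedVectors hy, real_inner_smul_left, hx y hy,
    mul_zero]

lemma swapSum_mem_orthogonal_degreeOneSpace (hT : T.Nonempty) (hx : x ∈ (degreeOneSpace ρ T)ᗮ) :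
    swapSum ρ T x ∈ (degreeOneSpace ρ T)ᗮ := fun y hy => by
  rw [← swapSum_isSymmetric]
  refine hx _ ?_
  rw [← sub_add_cancel (swapSum ρ T y) ((#T * (#T - 2) : ℝ) • y)]
  exact add_mem (fixedVectors_le_degreeOneSpace hT (swapSum_sub_smul_mem_fixedVectors hy))
    (Submodule.smul_mem _ _ hy)

lemma swapSum_of_mem_degreeOneSpace (hx : x ∈ degreeOneSpace ρ T)
    (hx' : x ∈ (fixedVectors ρ T)ᗮ) : swapSum ρ T x = (#T * (#T - 2) : ℝ) • x :=
  sub_eq_zero.1 <| Submodule.disjoint_def.1 (fixedVectors ρ T).orthogonal_disjoint _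
    (swapSum_sub_smul_mem_fixedVectors hx)
    (sub_mem (swapSum_mem_orthogonal_fixedVectors hx') (Submodule.smul_mem _ _ hx'))

lemma inner_swapSum_of_mem_fixedVectors_erase_erase (hv : v ∈ (degreeOneSpace ρ T)ᗮ) (hj : j ∈ T)
    (hk : k ∈ T.erase j) (hx : x ∈ fixedVectors ρ ((T.erase j).erase k)) :
    ⟪swapSum ρ T v, x⟫_ℝ =
      ((#T - 2) ^ 2 - 2 : ℝ) * ⟪v, x⟫_ℝ + 2 * ⟪v, ρ (swap j k) x⟫_ℝ := by
  obtain ⟨hkj, hkT⟩ := mem_erase.1 hk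
  rw [mem_orthogonal_degreeOneSpace] at hv
  have hsum_k : ⟪v, ∑ m ∈ T.erase j, ρ (swap k m) x⟫_ℝ = 0 :=
    Submodule.inner_left_of_mem_orthogonal (sum_swap_mem_fixedVectors hk hx) (hv j hj)
  have hsum_j : ⟪v, ∑ m ∈ T.erase k, ρ (swap j m) x⟫_ℝ = 0 := by
    rw [erase_right_comm] at hx
    exact Submodule.inner_left_of_mem_orthogonal
      (sum_swap_mem_fixedVectors (mem_erase.2 ⟨hkj.symm, hj⟩) hx) (hv k hkT)
  rw [swapSum_isSymmetric, swapSum_eq_swapSum_erase_add hj, swapSum_eq_swapSum_erase_add hk,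
    swapSum_of_mem_fixedVectors hx, cast_card_erase_of_mem hk, cast_card_erase_of_mem hj,
    ← add_sum_erase T _ hkT]
  simp only [inner_add_right, inner_sub_right, real_inner_smul_right, hsum_k, hsum_j]
  ring

lemma mem_orthogonal_degreeOneSpace_erase (hv : v ∈ (degreeOneSpace ρ T)ᗮ) {μ : ℝ}
    (hμ : swapSum ρ T v = μ • v) (hlt : (#T - 2 : ℝ) ^ 2 < μ) (hj : j ∈ T) :
    v ∈ (degreeOneSpace ρ (T.erase j))ᗮ := by
  refine mem_orthogonal_degreeOneSpace.2 fun k hk =>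
    (Submodule.mem_orthogonal' _ _).2 fun x hx => ?_
  have hswap : ρ (swap j k) x ∈ fixedVectors ρ ((T.erase j).erase k) :=
    swap_mem_fixedVectors (by simp) (by simp) hx
  have hx_eq := inner_swapSum_of_mem_fixedVectors_erase_erase hv hj hk hx
  have hswap_eq := inner_swapSum_of_mem_fixedVectors_erase_erase hv hj hk hswap
  rw [apply_swap_apply_swap] at hswap_eq
  rw [hμ, real_inner_smul_left] at hx_eq hswap_eq
  have hadd : (μ - (#T - 2) ^ 2) * (⟪v, x⟫_ℝ + ⟪v, ρ (swap j k) x⟫_ℝ) = 0 := by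
    linear_combination hx_eq + hswap_eq
  have hsub : (μ - (#T - 2) ^ 2 + 4) * (⟪v, x⟫_ℝ - ⟪v, ρ (swap j k) x⟫_ℝ) = 0 := by
    linear_combination hx_eq - hswap_eq
  linarith [(mul_eq_zero.1 hadd).resolve_left (by linarith),
    (mul_eq_zero.1 hsub).resolve_left (by linarith)]

lemma eigenvalue_swapSum_le (hT : T.Nonempty)
    (herase : ∀ j ∈ T, ∀ w ∈ (degreeOneSpace ρ (T.erase j))ᗮ,
      ⟪swapSum ρ (T.erase j) w, w⟫_ℝ ≤ (#(T.erase j) - 2 : ℝ) ^ 2 * ‖w‖ ^ 2)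
    (hv : v ∈ (degreeOneSpace ρ T)ᗮ) (hv0 : v ≠ 0) {μ : ℝ} (hμ : swapSum ρ T v = μ • v) :
    μ ≤ (#T - 2 : ℝ) ^ 2 := by
  by_contra! hlt
  have hcard : (3 : ℝ) ≤ #T := by
    by_contra! h
    rw [degreeOneSpace_eq_top_of_card_le_two hT (Nat.lt_succ_iff.1 (mod_cast h)),
      Submodule.top_orthogonal_eq_bot] at hv
    exact hv0 hv
  have hsum : (#T - 2 : ℝ) * (μ * ‖v‖ ^ 2) + #T * ‖v‖ ^ 2 ≤ #T * ((#T - 3) ^ 2 * ‖v‖ ^ 2) := calc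
    _ = ∑ j ∈ T, ⟪swapSum ρ (T.erase j) v, v⟫_ℝ := by
      rw [← sum_inner, sum_swapSum_erase, hμ, inner_add_left]
      simp only [real_inner_smul_left, real_inner_self_eq_norm_sq]
    _ ≤ ∑ j ∈ T, (#T - 3 : ℝ) ^ 2 * ‖v‖ ^ 2 := sum_le_sum fun j hj => by
      have hj_le := herase j hj v (mem_orthogonal_degreeOneSpace_erase hv hμ hlt hj)
      rwa [cast_card_erase_of_mem hj, sub_sub, show (1 + 2 : ℝ) = 3 by norm_num] at hj_le
    _ = _ := by rw [sum_const, nsmul_eq_mul]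
  have hμ_le : (#T - 2 : ℝ) * μ + #T ≤ #T * (#T - 3) ^ 2 :=
    le_of_mul_le_mul_right (by linarith) (pow_pos (norm_pos_iff.2 hv0) 2)
  have hlt_mul : (#T - 2 : ℝ) * (#T - 2) ^ 2 < (#T - 2) * μ :=
    mul_lt_mul_of_pos_left hlt (by linarith)
  linarith

theorem inner_swapSum_self_le [FiniteDimensional ℝ E] (T : Finset β) :
    ∀ v ∈ (degreeOneSpace ρ T)ᗮ, ⟪swapSum ρ T v, v⟫_ℝ ≤ (#T - 2 : ℝ) ^ 2 * ‖v‖ ^ 2 := by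
  induction T using Finset.strongInduction with
  | H T ih =>
    intro v hv
    obtain rfl | hT := T.eq_empty_or_nonempty
    · rw [swapSum_apply, sum_empty, inner_zero_left]
      positivity
    have hinv : ∀ w ∈ (degreeOneSpace ρ T)ᗮ, swapSum ρ T w ∈ (degreeOneSpace ρ T)ᗮ :=
      fun _ => swapSum_mem_orthogonal_degreeOneSpace hT
    refine inner_map_self_le_of_eigenvalue_le
      ((swapSum_isSymmetric ρ T).restrict_invariant hinv) (fun w μ hw0 hw => ?_) ⟨v, hv⟩
    exact eigenvalue_swapSum_le hT (fun j hj => ih _ (erase_ssubset hj)) w.2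
      (fun h => hw0 (Subtype.ext h)) (congrArg Subtype.val hw)

theorem norm_sub_sq_add_norm_sub_sq_le_swapSum [FiniteDimensional ℝ E] (hT : T.Nonempty)
    {f m p : E} (hm : m ∈ fixedVectors ρ T) (hfm : f - m ∈ (fixedVectors ρ T)ᗮ)
    (hp : p ∈ degreeOneSpace ρ T) (hfp : f - p ∈ (degreeOneSpace ρ T)ᗮ) :
    2 * #T * ‖f - m‖ ^ 2 + 2 * (#T - 2) * ‖f - p‖ ^ 2 ≤
      (#T : ℝ) ^ 2 * ‖f‖ ^ 2 - ⟪swapSum ρ T f, f⟫_ℝ := by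
  have hle : fixedVectors ρ T ≤ degreeOneSpace ρ T := fixedVectors_le_degreeOneSpace hT
  obtain ⟨q, rfl⟩ : ∃ q, p = m + q := ⟨p - m, by abel⟩
  obtain ⟨g, rfl⟩ : ∃ g, f = m + q + g := ⟨f - (m + q), by abel⟩
  rw [add_sub_cancel_left] at hfp ⊢
  rw [add_assoc, add_sub_cancel_left] at hfm ⊢
  have hq : q ∈ degreeOneSpace ρ T := by simpa using sub_mem hp (hle hm)
  have hq' : q ∈ (fixedVectors ρ T)ᗮ := by
    simpa using sub_mem hfm (Submodule.orthogonal_le hle hfp)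
  have hmq : ⟪m, q⟫_ℝ = 0 ∧ ⟪q, m⟫_ℝ = 0 := ⟨hq' m hm, inner_eq_zero_symm.1 (hq' m hm)⟩
  have hmg : ⟪m, g⟫_ℝ = 0 ∧ ⟪g, m⟫_ℝ = 0 :=
    ⟨hfp m (hle hm), inner_eq_zero_symm.1 (hfp m (hle hm))⟩
  have hqg : ⟪q, g⟫_ℝ = 0 ∧ ⟪g, q⟫_ℝ = 0 := ⟨hfp q hq, inner_eq_zero_symm.1 (hfp q hq)⟩
  have hKm := swapSum_of_mem_fixedVectors hm
  have hKq := swapSum_of_mem_degreeOneSpace hq hq'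
  have hKgm : ⟪swapSum ρ T g, m⟫_ℝ = 0 := by
    rw [swapSum_isSymmetric, hKm, real_inner_smul_right, hmg.2, mul_zero]
  have hKgq : ⟪swapSum ρ T g, q⟫_ℝ = 0 := by
    rw [swapSum_isSymmetric, hKq, real_inner_smul_right, hqg.2, mul_zero]
  have hKg := inner_swapSum_self_le T g hfp
  simp only [← real_inner_self_eq_norm_sq, map_add, inner_add_left, inner_add_right, hKm, hKq,
    real_inner_smul_left, hKgm, hKgq, hmq, hmg, hqg] at hKg ⊢
  linarith

end OrthogonalRepresentation

section MultisliceRepresentation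

open Equiv
open scoped InnerProductSpace

variable {ℓ n : ℕ} {κ : Fin ℓ → ℕ}

lemma comp_perm_mem_multislice_iff (σ : Perm (Fin n)) (u : Fin n → Fin ℓ) :
    u ∘ σ ∈ multislice ℓ n κ ↔ u ∈ multislice ℓ n κ := by
  have hcard (i) : #{j | (u ∘ σ) j = i} = #{j | u j = i} :=
    card_equiv σ fun j => by simp only [mem_filter_univ, Function.comp_apply]
  simp only [multislice, mem_filter_univ, hcard]

lemma exists_perm_of_mem_multislice {u v : Fin n → Fin ℓ} (hu : u ∈ multislice ℓ n κ)
    (hv : v ∈ multislice ℓ n κ) : ∃ σ : Perm (Fin n), v = u ∘ σ := by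
  simp only [multislice, mem_filter_univ] at hu hv
  have hfiber (i) : Nonempty ({j // v j = i} ≃ {j // u j = i}) := by
    rw [← Fintype.card_eq, Fintype.card_subtype, Fintype.card_subtype, hu, hv]
  exact ⟨ofFiberEquiv fun i => (hfiber i).some, funext fun k => (ofFiberEquiv_map _ k).symm⟩

lemma exists_perm_of_mem_multislice_of_apply_eq {u v : Fin n → Fin ℓ} (hu : u ∈ multislice ℓ n κ)
    (hv : v ∈ multislice ℓ n κ) {j : Fin n} (huv : u j = v j) :
    ∃ σ : Perm (Fin n), σ j = j ∧ v = u ∘ σ := by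
  obtain ⟨σ, rfl⟩ := exists_perm_of_mem_multislice hu hv
  refine ⟨swap j (σ j) * σ, by simp, ?_⟩
  rw [Function.comp_apply] at huv
  have hswap : u ∘ swap j (σ j) = u := by simp [comp_swap_eq_update, huv]
  rw [Perm.coe_mul, ← Function.comp_assoc, hswap]

/-- The orthogonal representation of the symmetric group on `L²(M_κ)`, with the counting inner
product, by permutation of coordinates: `σ` sends `f` to `u ↦ f (u ∘ σ)`. -/
def coordRep (κ : Fin ℓ → ℕ) : Perm (Fin n) →*
    (EuclideanSpace ℝ (multislice ℓ n κ) ≃ₗᵢ[ℝ] EuclideanSpace ℝ (multislice ℓ n κ)) where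
  toFun σ := LinearIsometryEquiv.piLpCongrLeft 2 ℝ ℝ <|
    (arrowCongr σ (Equiv.refl (Fin ℓ))).subtypeEquiv fun u =>
      (comp_perm_mem_multislice_iff σ.symm u).symm
  map_one' := rfl
  map_mul' _ _ := LinearIsometryEquiv.ext fun _ => rfl

/-- The restriction to the multislice of a function on `[ℓ]^n`, as a vector of the
space on which `coordRep` acts. -/
def msVec (κ : Fin ℓ → ℕ) (h : (Fin n → Fin ℓ) → ℝ) : EuclideanSpace ℝ (multislice ℓ n κ) :=
  WithLp.toLp 2 fun u => h u

lemma coordRep_apply (σ : Perm (Fin n)) (x : EuclideanSpace ℝ (multislice ℓ n κ))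
    (u : multislice ℓ n κ) :
    coordRep κ σ x u = x ⟨u.1 ∘ σ, (comp_perm_mem_multislice_iff σ u.1).2 u.2⟩ := rfl

lemma inner_msVec (h h' : (Fin n → Fin ℓ) → ℝ) :
    ⟪msVec κ h, msVec κ h'⟫_ℝ = ∑ u ∈ multislice ℓ n κ, h u * h' u := by
  rw [← sum_coe_sort]
  simp [msVec, PiLp.inner_apply, mul_comm]

lemma msVec_sub (h h' : (Fin n → Fin ℓ) → ℝ) :
    msVec κ (fun u => h u - h' u) = msVec κ h - msVec κ h' := rfl

lemma card_mul_msExp (h : (Fin n → Fin ℓ) → ℝ) :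
    #(multislice ℓ n κ) * msExp ℓ n κ h = ∑ u ∈ multislice ℓ n κ, h u := by
  refine mul_div_cancel_of_imp' fun hcard => ?_
  rw [Finset.card_eq_zero.1 (Nat.cast_eq_zero.1 hcard), sum_empty]

lemma norm_msVec_sq (h : (Fin n → Fin ℓ) → ℝ) :
    ‖msVec κ h‖ ^ 2 = #(multislice ℓ n κ) * msExp ℓ n κ fun u => h u ^ 2 := by
  simp only [card_mul_msExp, sq, ← inner_msVec, real_inner_self_eq_norm_mul_norm]

lemma msVec_comp_apply_mem_fixedVectors (φ : Fin ℓ → ℝ) (j : Fin n) :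
    msVec κ (fun u => φ (u j)) ∈ fixedVectors (coordRep κ) (univ.erase j) := fun σ hσ => by
  ext u
  rw [coordRep_apply]
  simp [msVec, hσ j (by simp)]

lemma msVec_const_mem_fixedVectors (c : ℝ) (S : Finset (Fin n)) :
    msVec κ (fun _ => c) ∈ fixedVectors (coordRep κ) S := fun _ _ => by
  ext u
  rfl

lemma exists_eq_msVec_of_mem_fixedVectors_erase {x : EuclideanSpace ℝ (multislice ℓ n κ)}
    {j : Fin n} (hx : x ∈ fixedVectors (coordRep κ) (univ.erase j)) :
    ∃ φ : Fin ℓ → ℝ, x = msVec κ (fun u => φ (u j)) := by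
  have hfactor : Function.FactorsThrough x.ofLp fun u : multislice ℓ n κ => u.1 j := by
    intro u v huv
    obtain ⟨σ, hσj, hσ⟩ := exists_perm_of_mem_multislice_of_apply_eq u.2 v.2 huv
    have hfix : coordRep κ σ x = x := hx σ fun b hb => by simp_all
    calc x u = coordRep κ σ x u := by rw [hfix]
      _ = x v := congrArg x.ofLp (Subtype.ext hσ.symm)
  obtain ⟨φ, hφ⟩ := (Function.factorsThrough_iff _).1 hfactor
  exact ⟨φ, WithLp.ofLp_injective _ hφ⟩

lemma exists_eq_msVec_const_of_mem_fixedVectors {x : EuclideanSpace ℝ (multislice ℓ n κ)}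
    (hx : x ∈ fixedVectors (coordRep κ) univ) : ∃ c : ℝ, x = msVec κ fun _ => c := by
  obtain hempty | ⟨⟨u⟩⟩ := isEmpty_or_nonempty (multislice ℓ n κ)
  · exact ⟨0, PiLp.ext hempty.elim⟩
  refine ⟨x u, PiLp.ext fun v => ?_⟩
  obtain ⟨σ, hσ⟩ := exists_perm_of_mem_multislice v.2 u.2
  have hfix : coordRep κ σ x = x := hx σ fun b hb => absurd (mem_univ b) hb
  calc x v = coordRep κ σ x v := by rw [hfix]
    _ = x u := congrArg x.ofLp (Subtype.ext hσ.symm)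

lemma msVec_mem_degreeOneSpace [NeZero n] {h : (Fin n → Fin ℓ) → ℝ} (hh : degreeOne ℓ n κ h) :
    msVec κ h ∈ degreeOneSpace (coordRep κ) univ := by
  obtain ⟨c, coef, hcoef⟩ := hh
  have heq : msVec κ h = msVec κ (fun _ => c) + ∑ j, msVec κ (fun u => coef j (u j)) := by
    ext u
    simp [msVec, hcoef u u.2, xvar]
  rw [heq]
  exact add_mem (fixedVectors_le_degreeOneSpace univ_nonempty (msVec_const_mem_fixedVectors c _))
    (sum_mem fun j _ => fixedVectors_erase_le_degreeOneSpace (mem_univ j)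
      (msVec_comp_apply_mem_fixedVectors (coef j) j))

lemma degreeOne_comp_apply (φ : Fin ℓ → ℝ) (j : Fin n) :
    degreeOne ℓ n κ fun u => φ (u j) :=
  ⟨0, Pi.single j φ, fun u _ => by simp [xvar, Pi.single_apply, ite_apply]⟩

lemma msVec_mem_orthogonal_degreeOneSpace {g : (Fin n → Fin ℓ) → ℝ}
    (hg : ∀ h, degreeOne ℓ n κ h → msExp ℓ n κ (fun u => g u * h u) = 0) :
    msVec κ g ∈ (degreeOneSpace (coordRep κ) univ)ᗮ := by
  refine mem_orthogonal_degreeOneSpace.2 fun j _ => (Submodule.mem_orthogonal' _ _).2 fun x hx => ?_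
  obtain ⟨φ, rfl⟩ := exists_eq_msVec_of_mem_fixedVectors_erase hx
  rw [inner_msVec, ← card_mul_msExp, hg _ (degreeOne_comp_apply φ j), mul_zero]

lemma swapSum_msVec (h : (Fin n → Fin ℓ) → ℝ) :
    swapSum (coordRep κ) univ (msVec κ h) = msVec κ fun u => ∑ a, ∑ b, h (u ∘ swap a b) := by
  ext u
  simp [swapSum_apply, coordRep_apply, msVec]

lemma card_swap_notMem (A : Finset (Fin n → Fin ℓ)) {u : Fin n → Fin ℓ} (hu : u ∈ A) :
    (#{q : Fin n × Fin n | q.1 ≠ q.2 ∧ u ∘ swap q.1 q.2 ∉ A} : ℝ) =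
      n ^ 2 - ∑ a, ∑ b, if u ∘ swap a b ∈ A then 1 else 0 := by
  have hne (q : Fin n × Fin n) :
      q.1 ≠ q.2 ∧ u ∘ swap q.1 q.2 ∉ A ↔ u ∘ swap q.1 q.2 ∉ A := by
    refine and_iff_right_of_imp fun hq h => hq ?_
    rwa [h, swap_self, coe_refl, Function.comp_id]
  have hcard := card_filter_add_card_filter_not (s := univ)
    fun q : Fin n × Fin n => u ∘ swap q.1 q.2 ∈ A
  rw [card_univ, Fintype.card_prod, Fintype.card_fin, ← sq] at hcard
  simp only [hne]
  rw [← Fintype.sum_prod_type', sum_boole, eq_sub_iff_add_eq']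
  exact_mod_cast hcard

lemma msExpansion_eq {A : Finset (Fin n → Fin ℓ)} (hA : A ⊆ multislice ℓ n κ) :
    msExpansion ℓ n A =
      (n ^ 2 * #A - ⟪swapSum (coordRep κ) univ (msVec κ fun u => if u ∈ A then 1 else 0),
        msVec κ fun u => if u ∈ A then 1 else 0⟫_ℝ) / (#A * (n * (n - 1))) := by
  rw [msExpansion, sum_congr rfl fun u hu => card_swap_notMem A hu, sum_sub_distrib, sum_const,
    nsmul_eq_mul, mul_comm (#A : ℝ), swapSum_msVec, inner_msVec]
  simp only [mul_ite, mul_one, mul_zero, sum_ite_mem, inter_eq_right.2 hA]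

lemma msVec_sub_const_mem_orthogonal_fixedVectors (h : (Fin n → Fin ℓ) → ℝ) :
    msVec κ h - msVec κ (fun _ => msExp ℓ n κ h) ∈ (fixedVectors (coordRep κ) univ)ᗮ := by
  refine (Submodule.mem_orthogonal' _ _).2 fun x hx => ?_
  obtain ⟨c, rfl⟩ := exists_eq_msVec_const_of_mem_fixedVectors hx
  rw [inner_sub_left, inner_msVec, inner_msVec, ← sum_mul, sum_const, nsmul_eq_mul, ← mul_assoc,
    card_mul_msExp, sub_self]

lemma msExp_indicator {A : Finset (Fin n → Fin ℓ)} (hA : A ⊆ multislice ℓ n κ) :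
    msExp ℓ n κ (fun u => if u ∈ A then 1 else 0) = msVol ℓ n κ A := by
  rw [msExp, msVol, sum_boole, filter_mem_eq_inter, inter_eq_right.2 hA]

lemma norm_msVec_indicator_sq {A : Finset (Fin n → Fin ℓ)} (hA : A ⊆ multislice ℓ n κ) :
    ‖msVec κ fun u => if u ∈ A then 1 else 0‖ ^ 2 = #A := by
  simp only [norm_msVec_sq, card_mul_msExp, ite_pow, one_pow, ne_eq,
    OfNat.ofNat_ne_zero, not_false_eq_true, zero_pow, sum_boole, filter_mem_eq_inter,
    inter_eq_right.2 hA]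

lemma norm_msVec_sub_const_sq (h : (Fin n → Fin ℓ) → ℝ) :
    ‖msVec κ h - msVec κ (fun _ => msExp ℓ n κ h)‖ ^ 2 =
      ‖msVec κ h‖ ^ 2 - #(multislice ℓ n κ) * msExp ℓ n κ h ^ 2 := by
  rw [norm_sub_sq_real, inner_msVec, norm_msVec_sq fun _ => msExp ℓ n κ h, card_mul_msExp,
    ← sum_mul, ← card_mul_msExp, sum_const, nsmul_eq_mul]
  ring

lemma norm_msVec_indicator_sub_msVol_sq {A : Finset (Fin n → Fin ℓ)}
    (hA : A ⊆ multislice ℓ n κ) :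
    ‖msVec κ (fun u => if u ∈ A then 1 else 0) - msVec κ (fun _ => msVol ℓ n κ A)‖ ^ 2 =
      #A * (1 - msVol ℓ n κ A) := by
  rw [← msExp_indicator hA, norm_msVec_sub_const_sq, norm_msVec_indicator_sq hA, sq, ← mul_assoc,
    card_mul_msExp, sum_boole, filter_mem_eq_inter, inter_eq_right.2 hA]
  ring

end MultisliceRepresentation

/-- **Spectral lower bound on expansion.**  For a set `A` of volume `α` on a multislice on
`n ≥ 4` points, `Φ(A) ≥ 2(1-α)/(n-1) + (2(n-2)/(n(n-1)))·‖(1_A)^{>1}‖²/α`, where the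
high-degree part of the indicator is expressed via the orthogonal projection `p = (1_A)^{≤1}`
onto the degree-one subspace. -/
theorem multislice_expansion_spectral_bound (ℓ n : ℕ) (hℓ : 2 ≤ ℓ) (hn : 4 ≤ n)
    (κ : Fin ℓ → ℕ) (hκ : ∀ i, 0 < κ i) (hsum : ∑ i, κ i = n)
    (A : Finset (Fin n → Fin ℓ)) (hA : A ⊆ multislice ℓ n κ) (hne : A.Nonempty)
    (α : ℝ) (hα : msVol ℓ n κ A = α)
    (p : (Fin n → Fin ℓ) → ℝ) (hp : degreeOne ℓ n κ p)
    (horth : ∀ h : (Fin n → Fin ℓ) → ℝ, degreeOne ℓ n κ h →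
      msExp ℓ n κ (fun u => ((if u ∈ A then (1 : ℝ) else 0) - p u) * h u) = 0) :
    2 * (1 - α) / ((n : ℝ) - 1) +
        (2 * ((n : ℝ) - 2) / ((n : ℝ) * ((n : ℝ) - 1))) *
          msExp ℓ n κ (fun u => ((if u ∈ A then (1 : ℝ) else 0) - p u) ^ 2) / α ≤
      msExpansion ℓ n A := by
  subst hα
  have : NeZero n := ⟨by lia⟩
  have hA_pos : (0 : ℝ) < #A := mod_cast hne.card_pos
  have hM_pos : (0 : ℝ) < #(multislice ℓ n κ) := hA_pos.trans_le (mod_cast card_le_card hA)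
  have hn_pos : (0 : ℝ) < n - 1 := by linarith [(Nat.ofNat_le_cast.2 hn : (4 : ℝ) ≤ n)]
  have hbound := norm_sub_sq_add_norm_sub_sq_le_swapSum (univ_nonempty (α := Fin n))
    (msVec_const_mem_fixedVectors _ _)
    (msVec_sub_const_mem_orthogonal_fixedVectors fun u => if u ∈ A then 1 else 0)
    (msVec_mem_degreeOneSpace hp) (msVec_mem_orthogonal_degreeOneSpace horth)
  rw [msExp_indicator hA, norm_msVec_indicator_sub_msVol_sq hA, norm_msVec_indicator_sq hA,
    ← msVec_sub, norm_msVec_sq, card_fin] at hbound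
  rw [msExpansion_eq hA]
  refine le_of_eq_of_le ?_ (div_le_div_of_nonneg_right hbound (by positivity))
  rw [msVol]
  field_simp
end
end
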